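/- Optimal one-way LOCC tester for mixed input (Theorem thm:ext / lemma-3311612): Let P = (Pyes, Pno) be a property of bipartite mixed states on Fin d × Fin d that is unitarily invariant on H_B and such that every element of Pyes is pure, i.e., equals ψψ† for some unit vector ψ : (Fin d × Fin d) → ℂ. Let 0 < s < c ≤ 1 and suppose there exists a (c,s)-tester for P with sample complexity N ≥ 1. Then there exists a one-way LOCC tester from Bob to Alice that is a (c,s)-tester for P with sample complexity at most ⌈100 * Real.log (1/s + 10) * (c − s)⁻³⌉ * max N ⌈2 * (c − s)⁻¹⌉ (in particular at most 200 * Real.log(1/s + 10) * (c − s)⁻⁴ * N). -/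

import Mathlib

open scoped ComplexConjugate ComplexOrder Kronecker Matrix
open MeasureTheory

namespace PaperStmt

/-- The rank-one matrix `ψψ†` associated with a vector `ψ`. -/
noncomputable def outer {ι : Type*} (ψ : ι → ℂ) : Matrix ι ι ℂ :=
  Matrix.of fun x y => ψ x * conj (ψ y)

/-- The `N`-fold tensor power of a square matrix `ρ`. -/
noncomputable def tpow {ι : Type*} (ρ : Matrix ι ι ℂ) (N : ℕ) : Matrix (Fin N → ι) (Fin N → ι) ℂ :=
  Matrix.of fun x y => ∏ i, ρ (x i) (y i)

/-- `ψ` is a unit vector (for the ℓ² norm). -/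
def IsUnitVec {ι : Type*} [Fintype ι] (ψ : ι → ℂ) : Prop :=
  ∑ x, Complex.normSq (ψ x) = 1

/-- `0 ⊑ T ⊑ 1` in the Loewner order. -/
def IsTester {κ : Type*} [Fintype κ] [DecidableEq κ] (T : Matrix κ κ ℂ) : Prop :=
  T.PosSemidef ∧ ((1 : Matrix κ κ ℂ) - T).PosSemidef

/-- `ρ` is a density matrix: positive semidefinite with unit trace. -/
def IsDensity {ι : Type*} [Fintype ι] (ρ : Matrix ι ι ℂ) : Prop :=
  ρ.PosSemidef ∧ ρ.trace = 1

/-- The acceptance probability `tr (T · ρ^{⊗N})` of a tester `T` on `N` samples of `ρ`. -/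
noncomputable def acc {ι : Type*} [Fintype ι] {N : ℕ}
    (T : Matrix (Fin N → ι) (Fin N → ι) ℂ) (ρ : Matrix ι ι ℂ) : ℝ :=
  ((T * tpow ρ N).trace).re

/-- The trace distance `½ ∑ᵢ |λᵢ(ρ - σ)|` between (Hermitian) matrices. -/
noncomputable def traceDist {κ : Type*} [Fintype κ] [DecidableEq κ]
    (ρ σ : Matrix κ κ ℂ) : ℝ :=
  if h : (ρ - σ).IsHermitian then (1 / 2) * ∑ i, |h.eigenvalues i| else 0

/-- The local tester on `H_A` determined by a matrix `M` acting on Alice's registers. -/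
noncomputable def localA {d N : ℕ} (M : Matrix (Fin N → Fin d) (Fin N → Fin d) ℂ) :
    Matrix (Fin N → Fin d × Fin d) (Fin N → Fin d × Fin d) ℂ :=
  Matrix.of fun x y =>
    M (fun i => (x i).1) (fun i => (y i).1) *
      (if (fun i => (x i).2) = (fun i => (y i).2) then 1 else 0)

/-- The vector `(I ⊗ U) ψ` : the unitary `U` applied to the `B` part of `ψ`. -/
noncomputable def applyB {d : ℕ} (U : Matrix (Fin d) (Fin d) ℂ) (ψ : Fin d × Fin d → ℂ) :
    Fin d × Fin d → ℂ :=
  fun p => ∑ k, U p.2 k * ψ (p.1, k)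

/-- The partial trace over the second (`B`) tensor factor. -/
noncomputable def ptraceB {d : ℕ} (M : Matrix (Fin d × Fin d) (Fin d × Fin d) ℂ) :
    Matrix (Fin d) (Fin d) ℂ :=
  Matrix.of fun a b => ∑ j, M (a, j) (b, j)


/-- A one-way LOCC tester from Bob to Alice: Bob measures a POVM `E` on his registers,
sends the classical outcome `k`, and Alice applies the two-outcome measurement `F k`. -/
def IsOneWayLOCC {d N : ℕ}
    (T : Matrix (Fin N → Fin d × Fin d) (Fin N → Fin d × Fin d) ℂ) : Prop :=
  ∃ (m : ℕ) (E F : Fin m → Matrix (Fin N → Fin d) (Fin N → Fin d) ℂ),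
    (∀ k, (E k).PosSemidef) ∧ (∑ k, E k = 1) ∧ (∀ k, IsTester (F k)) ∧
    ∀ x y, T x y =
      ∑ k, F k (fun i => (x i).1) (fun i => (y i).1) *
        E k (fun i => (x i).2) (fun i => (y i).2)

/-!
By a fixed-point argument (uniqueness of the element of minimal Frobenius norm in a closed convex
set) the given tester may be taken to commute with `(1 ⊗ U)^{⊗N}` for every unitary `U`. On a pure
state, whose tensor power is the vectorization of a matrix `X^{⊗N}`, such a tester only sees
`X† X`, and it therefore acts exactly as a tester `M` on Alice's registers alone; here `X^{⊗N}`
lies in the algebra spanned by the `U^{⊗N}` by Weyl's unitary trick.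

For mixed states, Alice and Bob first swap-test `m` pairs of samples, which one-way LOCC can do
because the joint swap accepts iff the two local outcomes agree, and Alice then runs `M` on `k`
fresh blocks and accepts if sufficiently few runs fail. Pure states pass every swap test. A state
that is likely to pass them has an eigenvalue close to `1`, so that `M` behaves on it nearly as the
original tester does, and a Chernoff bound applies.
-/

section Loewner

variable {κ κ' : Type*} [Fintype κ] [Fintype κ']

theorem trace_submatrix_equiv {R : Type*} [AddCommMonoid R] (e : κ ≃ κ') (A : Matrix κ' κ' R) :
    (A.submatrix e e).trace = A.trace :=
  e.sum_comp fun i => A i i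

theorem posSemidef_iff_exists_conjTranspose_mul_self {A : Matrix κ κ ℂ} :
    A.PosSemidef ↔ ∃ C : Matrix κ κ ℂ, A = Cᴴ * C := by
  classical
  open scoped MatrixOrder in
  exact Matrix.nonneg_iff_posSemidef.symm.trans CStarAlgebra.nonneg_iff_eq_star_mul_self

theorem trace_mul_nonneg {A B : Matrix κ κ ℂ} (hA : A.PosSemidef) (hB : B.PosSemidef) :
    0 ≤ (A * B).trace := by
  obtain ⟨C, rfl⟩ := posSemidef_iff_exists_conjTranspose_mul_self.mp hB
  rw [← mul_assoc, Matrix.trace_mul_comm, ← mul_assoc]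
  exact (hA.mul_mul_conjTranspose_same C).trace_nonneg

variable [DecidableEq κ] [DecidableEq κ']

theorem isTester_one : IsTester (1 : Matrix κ κ ℂ) :=
  ⟨.one, by simpa using Matrix.PosSemidef.zero⟩

theorem IsTester.one_sub {T : Matrix κ κ ℂ} (hT : IsTester T) : IsTester (1 - T) :=
  ⟨hT.2, by simpa using hT.1⟩

theorem IsTester.smul {T : Matrix κ κ ℂ} (hT : IsTester T) {a : ℝ} (ha0 : 0 ≤ a) (ha1 : a ≤ 1) :
    IsTester (a • T) := by
  refine ⟨hT.1.smul ha0, ?_⟩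
  have hsplit : 1 - a • T = a • (1 - T) + (1 - a) • (1 : Matrix κ κ ℂ) := by
    rw [smul_sub, sub_smul, one_smul]; abel
  rw [hsplit]
  exact (hT.2.smul ha0).add (Matrix.PosSemidef.one.smul (sub_nonneg.mpr ha1))

theorem isTester_of_isStarProjection {P : Matrix κ κ ℂ} (hP : IsStarProjection P) :
    IsTester P := by
  open scoped MatrixOrder in
  exact ⟨Matrix.nonneg_iff_posSemidef.mp hP.nonneg,
    Matrix.nonneg_iff_posSemidef.mp hP.one_sub.nonneg⟩

theorem IsTester.submatrix_equiv {T : Matrix κ κ ℂ} (hT : IsTester T) (e : κ' ≃ κ) :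
    IsTester (T.submatrix e e) := by
  refine ⟨hT.1.submatrix e, ?_⟩
  rw [← Matrix.submatrix_one_equiv e]
  exact hT.2.submatrix e

theorem IsTester.kronecker_add_one_sub_kronecker {A : Matrix κ κ ℂ} {B C : Matrix κ' κ' ℂ}
    (hA : IsTester A) (hB : IsTester B) (hC : IsTester C) :
    IsTester (A ⊗ₖ B + (1 - A) ⊗ₖ C) := by
  refine ⟨(hA.1.kronecker hB.1).add (hA.2.kronecker hC.1), ?_⟩
  have hcompl : 1 - (A ⊗ₖ B + (1 - A) ⊗ₖ C) = A ⊗ₖ (1 - B) + (1 - A) ⊗ₖ (1 - C) := by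
    rw [← Matrix.one_kronecker_one]
    ext ⟨i, j⟩ ⟨i', j'⟩
    simp only [Matrix.sub_apply, Matrix.add_apply, Matrix.kronecker_apply]
    ring
  rw [hcompl]
  exact (hA.1.kronecker hB.2).add (hA.2.kronecker hC.2)

theorem IsTester.kronecker {A : Matrix κ κ ℂ} {B : Matrix κ' κ' ℂ}
    (hA : IsTester A) (hB : IsTester B) : IsTester (A ⊗ₖ B) := by
  have h := hA.kronecker_add_one_sub_kronecker hB isTester_one.one_sub
  simpa only [sub_self, Matrix.kronecker_zero, add_zero] using h

end Loewner

section Tensor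

variable {ι : Type*}

/-- The tensor product of operators on two blocks of `a` and `b` samples, as an operator on the
concatenated block of `a + b` samples. -/
noncomputable def tensor {a b : ℕ} (A : Matrix (Fin a → ι) (Fin a → ι) ℂ)
    (B : Matrix (Fin b → ι) (Fin b → ι) ℂ) : Matrix (Fin (a + b) → ι) (Fin (a + b) → ι) ℂ :=
  (A ⊗ₖ B).submatrix (Fin.appendEquiv a b).symm (Fin.appendEquiv a b).symm

variable {a b n : ℕ} {A A' : Matrix (Fin a → ι) (Fin a → ι) ℂ}
  {B B' : Matrix (Fin b → ι) (Fin b → ι) ℂ}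

theorem tensor_apply (x y : Fin (a + b) → ι) :
    tensor A B x y = A (fun i => x (Fin.castAdd b i)) (fun i => y (Fin.castAdd b i)) *
      B (fun i => x (Fin.natAdd a i)) (fun i => y (Fin.natAdd a i)) :=
  rfl

theorem tensor_sub_left : tensor (A - A') B = tensor A B - tensor A' B := by
  ext; simp [tensor_apply, sub_mul]

theorem tensor_sub_right : tensor A (B - B') = tensor A B - tensor A B' := by
  ext; simp [tensor_apply, mul_sub]

theorem tensor_sum_left {m : Type*} [Fintype m] (A : m → Matrix (Fin a → ι) (Fin a → ι) ℂ) :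
    tensor (∑ k, A k) B = ∑ k, tensor (A k) B := by
  ext; simp [tensor_apply, Matrix.sum_apply, Finset.sum_mul]

theorem tensor_sum_right {m : Type*} [Fintype m] (B : m → Matrix (Fin b → ι) (Fin b → ι) ℂ) :
    tensor A (∑ k, B k) = ∑ k, tensor A (B k) := by
  ext; simp [tensor_apply, Matrix.sum_apply, Finset.mul_sum]

theorem tpow_add (ρ : Matrix ι ι ℂ) (a b : ℕ) :
    tpow ρ (a + b) = tensor (tpow ρ a) (tpow ρ b) := by
  ext; simp [tpow, tensor_apply, Fin.prod_univ_add]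

theorem tpow_smul (w : ℂ) (ρ : Matrix ι ι ℂ) (n : ℕ) :
    tpow (w • ρ) n = w ^ n • tpow ρ n := by
  ext; simp [tpow, Finset.prod_mul_distrib]

theorem tpow_conjTranspose (ρ : Matrix ι ι ℂ) (n : ℕ) : tpow ρᴴ n = (tpow ρ n)ᴴ := by
  ext; simp [tpow]

theorem tpow_one_eq_submatrix (ρ : Matrix ι ι ℂ) :
    tpow ρ 1 = ρ.submatrix (fun x => x 0) (fun x => x 0) := by
  ext; simp [tpow]

theorem tensor_one [DecidableEq ι] : tensor (1 : Matrix (Fin a → ι) (Fin a → ι) ℂ)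
    (1 : Matrix (Fin b → ι) (Fin b → ι) ℂ) = 1 := by
  rw [tensor, Matrix.one_kronecker_one, Matrix.submatrix_one_equiv]

theorem one_tpow [DecidableEq ι] (n : ℕ) : tpow (1 : Matrix ι ι ℂ) n = 1 := by
  ext x y
  simp [tpow, Matrix.one_apply, Fintype.prod_ite_zero, funext_iff]

section

variable [Fintype ι]

theorem tensor_mul : tensor A B * tensor A' B' = tensor (A * A') (B * B') := by
  rw [tensor, tensor, tensor, Matrix.submatrix_mul_equiv, Matrix.mul_kronecker_mul]

theorem tensor_trace : (tensor A B).trace = A.trace * B.trace := by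
  rw [tensor, trace_submatrix_equiv, Matrix.trace_kronecker]

theorem tpow_mul (ρ σ : Matrix ι ι ℂ) (n : ℕ) : tpow (ρ * σ) n = tpow ρ n * tpow σ n := by
  ext x y
  simp [tpow, Matrix.mul_apply, Finset.prod_univ_sum, Finset.prod_mul_distrib]

theorem tpow_trace (ρ : Matrix ι ι ℂ) (n : ℕ) : (tpow ρ n).trace = ρ.trace ^ n := by
  simp only [← Fin.prod_const, Matrix.trace, Finset.prod_univ_sum, Fintype.piFinset_univ]
  rfl

end

section

variable [Finite ι]

theorem tensor_posSemidef (hA : A.PosSemidef) (hB : B.PosSemidef) : (tensor A B).PosSemidef :=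
  (hA.kronecker hB).submatrix _

theorem tpow_posSemidef {ρ : Matrix ι ι ℂ} (hρ : ρ.PosSemidef) (n : ℕ) :
    (tpow ρ n).PosSemidef := by
  have := Fintype.ofFinite ι
  obtain ⟨C, rfl⟩ := posSemidef_iff_exists_conjTranspose_mul_self.mp hρ
  rw [tpow_mul, tpow_conjTranspose]
  exact Matrix.posSemidef_conjTranspose_mul_self _

theorem tpow_sub_tpow_posSemidef {ρ σ : Matrix ι ι ℂ} (hρ : ρ.PosSemidef)
    (hσ : (σ - ρ).PosSemidef) (n : ℕ) : (tpow σ n - tpow ρ n).PosSemidef := by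
  have hσ' : σ.PosSemidef := by simpa using hσ.add hρ
  induction n with
  | zero =>
    have : tpow σ 0 = tpow ρ 0 := by ext; simp [tpow]
    simpa [this] using Matrix.PosSemidef.zero
  | succ n ih =>
    have htelescope : tpow σ (n + 1) - tpow ρ (n + 1) =
        tensor (tpow σ n - tpow ρ n) (tpow σ 1) + tensor (tpow ρ n) (tpow σ 1 - tpow ρ 1) := by
      rw [tpow_add, tpow_add, tensor_sub_left, tensor_sub_right]; abel
    rw [htelescope]
    refine (tensor_posSemidef ih (tpow_posSemidef hσ' 1)).add
      (tensor_posSemidef (tpow_posSemidef hρ n) ?_)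
    rw [tpow_one_eq_submatrix, tpow_one_eq_submatrix]
    exact hσ.submatrix fun x : Fin 1 → ι => x 0

end

section

variable [Fintype ι] [DecidableEq ι]

theorem IsTester.tensor (hA : IsTester A) (hB : IsTester B) : IsTester (tensor A B) :=
  (hA.kronecker hB).submatrix_equiv _

theorem IsTester.tensor_add_one_sub_tensor (hA : IsTester A) (hB : IsTester B)
    (hB' : IsTester B') : IsTester (PaperStmt.tensor A B + PaperStmt.tensor (1 - A) B') :=
  (hA.kronecker_add_one_sub_kronecker hB hB').submatrix_equiv _

end

end Tensor

section Acceptance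

variable {ι : Type*} [Fintype ι] {a b n : ℕ} {ρ : Matrix ι ι ℂ}

theorem acc_add (T S : Matrix (Fin n → ι) (Fin n → ι) ℂ) (ρ : Matrix ι ι ℂ) :
    acc (T + S) ρ = acc T ρ + acc S ρ := by
  simp [acc, add_mul]

theorem acc_sub (T S : Matrix (Fin n → ι) (Fin n → ι) ℂ) (ρ : Matrix ι ι ℂ) :
    acc (T - S) ρ = acc T ρ - acc S ρ := by
  simp [acc, sub_mul]

theorem acc_smul (r : ℝ) (T : Matrix (Fin n → ι) (Fin n → ι) ℂ) (ρ : Matrix ι ι ℂ) :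
    acc (r • T) ρ = r * acc T ρ := by
  simp [acc]

theorem acc_conj (T : Matrix (Fin n → ι) (Fin n → ι) ℂ) (W ρ : Matrix ι ι ℂ) :
    acc (tpow W n * T * (tpow W n)ᴴ) ρ = acc T (Wᴴ * ρ * W) := by
  rw [acc, acc, tpow_mul, tpow_mul, tpow_conjTranspose, mul_assoc, mul_assoc,
    Matrix.trace_mul_comm]
  simp only [mul_assoc]

variable {T : Matrix (Fin n → ι) (Fin n → ι) ℂ}

theorem trace_mul_tpow (hT : T.PosSemidef) (hρ : ρ.PosSemidef) :
    (T * tpow ρ n).trace = (acc T ρ : ℂ) :=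
  Complex.eq_re_of_ofReal_le (r := 0) (by simpa using trace_mul_nonneg hT (tpow_posSemidef hρ n))

theorem acc_nonneg (hT : T.PosSemidef) (hρ : ρ.PosSemidef) : 0 ≤ acc T ρ :=
  (Complex.nonneg_iff.mp (trace_mul_nonneg hT (tpow_posSemidef hρ n))).1

theorem acc_tensor {A : Matrix (Fin a → ι) (Fin a → ι) ℂ} {B : Matrix (Fin b → ι) (Fin b → ι) ℂ}
    (hA : A.PosSemidef) (hB : B.PosSemidef) (hρ : ρ.PosSemidef) :
    acc (tensor A B) ρ = acc A ρ * acc B ρ := by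
  rw [acc, tpow_add, tensor_mul, tensor_trace, trace_mul_tpow hA hρ, trace_mul_tpow hB hρ,
    ← Complex.ofReal_mul, Complex.ofReal_re]

variable [DecidableEq ι]

theorem acc_one (hρ : IsDensity ρ) : acc (1 : Matrix (Fin n → ι) (Fin n → ι) ℂ) ρ = 1 := by
  simp [acc, tpow_trace, hρ.2]

theorem acc_le_one (hT : IsTester T) (hρ : IsDensity ρ) : acc T ρ ≤ 1 := by
  have h := acc_nonneg hT.2 hρ.1
  rw [acc_sub, acc_one hρ] at h
  linarith

end Acceptance

section SwapTest

theorem isStarProjection_half_smul_one_add {A : Type*} [Ring A] [StarRing A] [Algebra ℝ A]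
    [StarModule ℝ A] {S : A} (hS : IsSelfAdjoint S) (hSS : S * S = 1) :
    IsStarProjection ((1 / 2 : ℝ) • (1 + S)) where
  isIdempotentElem := by
    have hsq : (1 + S) * (1 + S) = (2 : ℝ) • (1 + S) := by
      rw [two_smul, add_mul, mul_add S, hSS, one_mul, mul_one, add_comm S]
    rw [IsIdempotentElem, smul_mul_smul_comm, hsq, smul_smul]
    norm_num
  isSelfAdjoint := by
    simp [isSelfAdjoint_iff, hS.star_eq]

variable (ι : Type*)

/-- The permutation of pairs of samples that exchanges the two samples. -/
def swapPerm : Equiv.Perm (Fin 2 → ι) :=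
  (Equiv.swap 0 1).arrowCongr (Equiv.refl ι)

variable {ι} in
theorem swapPerm_apply (x : Fin 2 → ι) : swapPerm ι x = ![x 1, x 0] := by
  ext i; fin_cases i <;> rfl

theorem swapPerm_mul_self : swapPerm ι * swapPerm ι = 1 := by
  ext x i; fin_cases i <;> rfl

theorem swapPerm_inv : (swapPerm ι)⁻¹ = swapPerm ι :=
  inv_eq_of_mul_eq_one_left (swapPerm_mul_self ι)

variable [DecidableEq ι]

/-- The swap test on two samples: the projection onto the symmetric subspace. -/
noncomputable def swapTest : Matrix (Fin 2 → ι) (Fin 2 → ι) ℂ :=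
  (1 / 2 : ℝ) • (1 + (swapPerm ι).permMatrix ℂ)

variable [Fintype ι]

theorem isTester_swapTest : IsTester (swapTest ι) := by
  refine isTester_of_isStarProjection (isStarProjection_half_smul_one_add ?_ ?_)
  · rw [isSelfAdjoint_iff, Matrix.star_eq_conjTranspose, Matrix.conjTranspose_permMatrix,
      swapPerm_inv]
  · rw [← Matrix.permMatrix_mul, swapPerm_mul_self, Matrix.permMatrix_one]

variable {ι}

theorem trace_permMatrix_swapPerm_mul_tpow (ρ : Matrix ι ι ℂ) :
    ((swapPerm ι).permMatrix ℂ * tpow ρ 2).trace = (ρ * ρ).trace := by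
  rw [Equiv.Perm.permMatrix, PEquiv.toMatrix_toPEquiv_mul, Matrix.trace,
    ← (finTwoArrowEquiv ι).symm.sum_comp, Fintype.sum_prod_type]
  simp [tpow, Matrix.trace, Matrix.mul_apply, swapPerm_apply, finTwoArrowEquiv, mul_comm]

theorem acc_swapTest {ρ : Matrix ι ι ℂ} (hρ : IsDensity ρ) :
    acc (swapTest ι) ρ = (1 + (ρ * ρ).trace.re) / 2 := by
  have hswap : acc ((swapPerm ι).permMatrix ℂ) ρ = (ρ * ρ).trace.re := by
    rw [acc, trace_permMatrix_swapPerm_mul_tpow]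
  rw [swapTest, acc_smul, acc_add, acc_one hρ, hswap]
  ring

end SwapTest

section Bipartite

variable {α β : Type*} {N a b : ℕ}

/-- The operator `F ⊗ E` on `N` bipartite samples, where `F` acts on Alice's and `E` on Bob's
registers. -/
noncomputable def bipartite (F : Matrix (Fin N → α) (Fin N → α) ℂ)
    (E : Matrix (Fin N → β) (Fin N → β) ℂ) : Matrix (Fin N → α × β) (Fin N → α × β) ℂ :=
  (F ⊗ₖ E).submatrix (Equiv.arrowProdEquivProdArrow _ _ _) (Equiv.arrowProdEquivProdArrow _ _ _)

theorem bipartite_apply (F : Matrix (Fin N → α) (Fin N → α) ℂ)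
    (E : Matrix (Fin N → β) (Fin N → β) ℂ) (x y : Fin N → α × β) :
    bipartite F E x y =
      F (fun i => (x i).1) (fun i => (y i).1) * E (fun i => (x i).2) (fun i => (y i).2) :=
  rfl

theorem bipartite_tensor (F : Matrix (Fin a → α) (Fin a → α) ℂ)
    (E : Matrix (Fin a → β) (Fin a → β) ℂ) (F' : Matrix (Fin b → α) (Fin b → α) ℂ)
    (E' : Matrix (Fin b → β) (Fin b → β) ℂ) :
    bipartite (tensor F F') (tensor E E') = tensor (bipartite F E) (bipartite F' E') := by
  ext x y
  simp only [bipartite_apply, tensor_apply]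
  ring

theorem tpow_kronecker (A : Matrix α α ℂ) (B : Matrix β β ℂ) (N : ℕ) :
    tpow (A ⊗ₖ B) N = bipartite (tpow A N) (tpow B N) := by
  ext; simp [tpow, bipartite_apply, Finset.prod_mul_distrib]

theorem bipartite_one_one [DecidableEq α] [DecidableEq β] :
    bipartite (1 : Matrix (Fin N → α) (Fin N → α) ℂ) (1 : Matrix (Fin N → β) (Fin N → β) ℂ) =
      1 := by
  rw [bipartite, Matrix.one_kronecker_one, Matrix.submatrix_one_equiv]

theorem bipartite_permMatrix_swapPerm [DecidableEq α] [DecidableEq β] :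
    bipartite ((swapPerm α).permMatrix ℂ) ((swapPerm β).permMatrix ℂ) =
      (swapPerm (α × β)).permMatrix ℂ := by
  ext x y
  simp only [bipartite_apply, PEquiv.toMatrix_apply, Equiv.toPEquiv_apply, swapPerm_apply,
    Option.mem_def, Option.some.injEq, funext_iff, Fin.forall_fin_two, Matrix.cons_val_zero,
    Matrix.cons_val_one, Matrix.cons_val_fin_one, mul_ite, mul_one, mul_zero, ← ite_and,
    Prod.ext_iff]
  grind

end Bipartite

section OneWayLOCC

variable {d N a b : ℕ}

theorem isOneWayLOCC_sum_bipartite {m : Type*} [Fintype m]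
    {E F : m → Matrix (Fin N → Fin d) (Fin N → Fin d) ℂ} (hE : ∀ k, (E k).PosSemidef)
    (hE1 : ∑ k, E k = 1) (hF : ∀ k, IsTester (F k)) :
    IsOneWayLOCC (∑ k, bipartite (F k) (E k)) := by
  let e := (Fintype.equivFin m).symm
  refine ⟨Fintype.card m, E ∘ e, F ∘ e, fun k => hE _, (e.sum_comp E).trans hE1,
    fun k => hF _, fun x y => ?_⟩
  rw [← e.sum_comp, Matrix.sum_apply]
  rfl

theorem IsOneWayLOCC.exists_eq_sum_bipartite
    {T : Matrix (Fin N → Fin d × Fin d) (Fin N → Fin d × Fin d) ℂ} (hT : IsOneWayLOCC T) :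
    ∃ (m : ℕ) (E F : Fin m → Matrix (Fin N → Fin d) (Fin N → Fin d) ℂ),
      (∀ k, (E k).PosSemidef) ∧ ∑ k, E k = 1 ∧ (∀ k, IsTester (F k)) ∧
        T = ∑ k, bipartite (F k) (E k) := by
  obtain ⟨m, E, F, hE, hE1, hF, hTE⟩ := hT
  refine ⟨m, E, F, hE, hE1, hF, ?_⟩
  ext x y
  rw [hTE, Matrix.sum_apply]
  rfl

theorem IsOneWayLOCC.tensor
    {T : Matrix (Fin a → Fin d × Fin d) (Fin a → Fin d × Fin d) ℂ}
    {S : Matrix (Fin b → Fin d × Fin d) (Fin b → Fin d × Fin d) ℂ}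
    (hT : IsOneWayLOCC T) (hS : IsOneWayLOCC S) : IsOneWayLOCC (tensor T S) := by
  obtain ⟨m, E, F, hE, hE1, hF, rfl⟩ := hT.exists_eq_sum_bipartite
  obtain ⟨m', E', F', hE', hE1', hF', rfl⟩ := hS.exists_eq_sum_bipartite
  simp_rw [tensor_sum_left, tensor_sum_right, ← bipartite_tensor]
  rw [← Fintype.sum_prod_type' fun k k' =>
    bipartite (PaperStmt.tensor (F k) (F' k')) (PaperStmt.tensor (E k) (E' k'))]
  refine isOneWayLOCC_sum_bipartite (fun k => tensor_posSemidef (hE _) (hE' _)) ?_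
    fun k => (hF _).tensor (hF' _)
  simp_rw [Fintype.sum_prod_type, ← tensor_sum_right, ← tensor_sum_left, hE1, hE1', tensor_one]

theorem localA_eq_bipartite (M : Matrix (Fin N → Fin d) (Fin N → Fin d) ℂ) :
    localA M = bipartite M 1 := by
  ext; simp [localA, bipartite_apply, Matrix.one_apply]

theorem IsTester.localA {M : Matrix (Fin N → Fin d) (Fin N → Fin d) ℂ} (hM : IsTester M) :
    IsTester (localA M) := by
  rw [localA_eq_bipartite]
  exact (hM.kronecker isTester_one).submatrix_equiv _

theorem isOneWayLOCC_localA {M : Matrix (Fin N → Fin d) (Fin N → Fin d) ℂ} (hM : IsTester M) :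
    IsOneWayLOCC (localA M) := by
  have h := isOneWayLOCC_sum_bipartite (m := Unit) (fun _ => Matrix.PosSemidef.one) (by simp)
    fun _ => hM
  rwa [Fintype.sum_unique, ← localA_eq_bipartite] at h

-- Alice and Bob each swap-test their own halves; the joint test passes iff the outcomes agree.
theorem swapTest_prod_eq_bipartite :
    swapTest (Fin d × Fin d) = bipartite (swapTest (Fin d)) (swapTest (Fin d)) +
      bipartite (1 - swapTest (Fin d)) (1 - swapTest (Fin d)) := by
  rw [swapTest, ← bipartite_one_one, ← bipartite_permMatrix_swapPerm]
  ext x y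
  simp only [swapTest, bipartite_apply, Matrix.smul_apply, Matrix.add_apply, Matrix.sub_apply,
    Complex.real_smul]
  push_cast
  ring

theorem isOneWayLOCC_swapTest : IsOneWayLOCC (swapTest (Fin d × Fin d)) := by
  have htest := isTester_swapTest (Fin d)
  have h := isOneWayLOCC_sum_bipartite (E := ![swapTest (Fin d), 1 - swapTest (Fin d)])
    (F := ![swapTest (Fin d), 1 - swapTest (Fin d)])
    (Fin.forall_fin_two.mpr ⟨htest.1, htest.2⟩) (by simp)
    (Fin.forall_fin_two.mpr ⟨htest, htest.one_sub⟩)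
  rw [swapTest_prod_eq_bipartite]
  simpa using h

theorem exists_isOneWayLOCC_acc_eq_pow
    {T : Matrix (Fin N → Fin d × Fin d) (Fin N → Fin d × Fin d) ℂ} (hT : IsTester T)
    (hT' : IsOneWayLOCC T) (m : ℕ) :
    ∃ S : Matrix (Fin (N * m) → Fin d × Fin d) (Fin (N * m) → Fin d × Fin d) ℂ,
      IsTester S ∧ IsOneWayLOCC S ∧ ∀ ρ, IsDensity ρ → acc S ρ = acc T ρ ^ m := by
  induction m with
  | zero =>
    refine ⟨localA 1, isTester_one.localA, isOneWayLOCC_localA isTester_one, fun ρ hρ => ?_⟩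
    rw [localA_eq_bipartite, bipartite_one_one, acc_one hρ, pow_zero]
  | succ m ih =>
    obtain ⟨S, hS, hS', hacc⟩ := ih
    refine ⟨tensor S T, hS.tensor hT, hS'.tensor hT', fun ρ hρ => ?_⟩
    rw [acc_tensor hS.1 hT.1 hρ.1, hacc ρ hρ, pow_succ]

end OneWayLOCC

section BinomialExpectation

/-- The expectation of `f j`, where `j` is the number of failures among `k` independent trials
that each succeed with probability `p`. -/
noncomputable def binomialExpectation (p : ℝ) : ℕ → (ℕ → ℝ) → ℝ
  | 0, f => f 0
  | k + 1, f => p * binomialExpectation p k f + (1 - p) * binomialExpectation p k fun j => f (j + 1)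

variable {p : ℝ} {f g : ℕ → ℝ}

theorem binomialExpectation_mono (hp0 : 0 ≤ p) (hp1 : p ≤ 1) (hfg : ∀ j, f j ≤ g j) (k : ℕ) :
    binomialExpectation p k f ≤ binomialExpectation p k g := by
  induction k generalizing f g with
  | zero => exact hfg 0
  | succ k ih =>
    have := sub_nonneg.mpr hp1
    simp only [binomialExpectation]
    gcongr
    exacts [ih hfg, ih fun j => hfg (j + 1)]

theorem binomialExpectation_const (p a : ℝ) (k : ℕ) :
    binomialExpectation p k (fun _ => a) = a := by
  induction k with
  | zero => rfl
  | succ k ih => rw [binomialExpectation, ih]; ring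

theorem binomialExpectation_mem_Icc (hp0 : 0 ≤ p) (hp1 : p ≤ 1) (hf0 : ∀ j, 0 ≤ f j)
    (hf1 : ∀ j, f j ≤ 1) (k : ℕ) : binomialExpectation p k f ∈ Set.Icc 0 1 :=
  ⟨(binomialExpectation_const p 0 k).symm.trans_le (binomialExpectation_mono hp0 hp1 hf0 k),
    (binomialExpectation_mono hp0 hp1 hf1 k).trans_eq (binomialExpectation_const p 1 k)⟩

theorem binomialExpectation_const_mul (p a : ℝ) (k : ℕ) (f : ℕ → ℝ) :
    binomialExpectation p k (fun j => a * f j) = a * binomialExpectation p k f := by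
  induction k generalizing f with
  | zero => rfl
  | succ k ih => simp only [binomialExpectation, ih]; ring

theorem binomialExpectation_one_sub (p : ℝ) (k : ℕ) (f : ℕ → ℝ) :
    binomialExpectation p k (fun j => 1 - f j) = 1 - binomialExpectation p k f := by
  induction k generalizing f with
  | zero => rfl
  | succ k ih => simp only [binomialExpectation, ih]; ring

theorem binomialExpectation_exp (p θ : ℝ) (k : ℕ) :
    binomialExpectation p k (fun j => Real.exp (-(θ * j))) = (p + (1 - p) * Real.exp (-θ)) ^ k := by
  induction k with
  | zero => simp [binomialExpectation]
  | succ k ih =>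
    have hshift : (fun j : ℕ => Real.exp (-(θ * (j + 1 : ℕ)))) =
        fun j : ℕ => Real.exp (-θ) * Real.exp (-(θ * j)) := by
      funext j
      rw [← Real.exp_add]
      push_cast
      ring_nf
    rw [binomialExpectation, hshift, binomialExpectation_const_mul, ih]
    ring

theorem binomialExpectation_sub_sq (p a : ℝ) (k : ℕ) :
    binomialExpectation p k (fun j => ((j : ℝ) - a) ^ 2) =
      k * (p * (1 - p)) + (k * (1 - p) - a) ^ 2 := by
  induction k generalizing a with
  | zero => simp [binomialExpectation]
  | succ k ih =>
    have hshift : (fun j : ℕ => (((j + 1 : ℕ) : ℝ) - a) ^ 2) =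
        fun j : ℕ => ((j : ℝ) - (a - 1)) ^ 2 := by
      funext j
      push_cast
      ring
    rw [binomialExpectation, hshift, ih, ih]
    push_cast
    ring

/-- The decision rule that accepts when at most `τ` trials have failed. -/
noncomputable def thresholdRule (τ : ℝ) (j : ℕ) : ℝ :=
  if (j : ℝ) ≤ τ then 1 else 0

theorem thresholdRule_nonneg (τ : ℝ) (j : ℕ) : 0 ≤ thresholdRule τ j := by
  unfold thresholdRule; split_ifs <;> norm_num

theorem thresholdRule_le_one (τ : ℝ) (j : ℕ) : thresholdRule τ j ≤ 1 := by
  unfold thresholdRule; split_ifs <;> norm_num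

theorem chernoff_binomialExpectation (hp0 : 0 ≤ p) (hp1 : p ≤ 1) {θ : ℝ} (hθ : 0 ≤ θ) (k : ℕ)
    (τ : ℝ) :
    binomialExpectation p k (thresholdRule τ) ≤
      Real.exp (θ * τ) * (p + (1 - p) * Real.exp (-θ)) ^ k := by
  have hmarkov (j : ℕ) : thresholdRule τ j ≤ Real.exp (θ * τ) * Real.exp (-(θ * j)) := by
    rw [thresholdRule, ← Real.exp_add]
    split_ifs with hj
    · exact Real.one_le_exp (by nlinarith)
    · positivity
  calc binomialExpectation p k (thresholdRule τ)
      ≤ binomialExpectation p k fun j => Real.exp (θ * τ) * Real.exp (-(θ * j)) :=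
        binomialExpectation_mono hp0 hp1 hmarkov k
    _ = _ := by rw [binomialExpectation_const_mul, binomialExpectation_exp]

theorem chebyshev_binomialExpectation (hp0 : 0 ≤ p) (hp1 : p ≤ 1) {t : ℝ} (ht : 0 ≤ t) (k : ℕ) :
    (1 - binomialExpectation p k (thresholdRule (k * (1 - p) + t))) * t ^ 2 ≤
      k * (p * (1 - p)) := by
  have hmarkov (j : ℕ) : t ^ 2 * (1 - thresholdRule (k * (1 - p) + t) j) ≤
      ((j : ℝ) - k * (1 - p)) ^ 2 := by
    rw [thresholdRule]
    split_ifs with hj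
    · simpa using sq_nonneg ((j : ℝ) - k * (1 - p))
    · push Not at hj
      nlinarith
  have h := binomialExpectation_mono hp0 hp1 hmarkov k
  rw [binomialExpectation_const_mul, binomialExpectation_one_sub, binomialExpectation_sub_sq] at h
  linarith

theorem thresholdRule_mono {τ τ' : ℝ} (hτ : τ ≤ τ') (j : ℕ) :
    thresholdRule τ j ≤ thresholdRule τ' j := by
  unfold thresholdRule; split_ifs <;> linarith

end BinomialExpectation

section Amplification

variable {ι : Type*} [Fintype ι] [DecidableEq ι] {N : ℕ}

theorem exists_isTester_acc_eq_binomialExpectation {M : Matrix (Fin N → ι) (Fin N → ι) ℂ}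
    (hM : IsTester M) (k : ℕ) {f : ℕ → ℝ} (hf0 : ∀ j, 0 ≤ f j) (hf1 : ∀ j, f j ≤ 1) :
    ∃ Q : Matrix (Fin (N * k) → ι) (Fin (N * k) → ι) ℂ, IsTester Q ∧
      ∀ ρ, IsDensity ρ → acc Q ρ = binomialExpectation (acc M ρ) k f := by
  induction k generalizing f with
  | zero =>
    refine ⟨f 0 • 1, isTester_one.smul (hf0 0) (hf1 0), fun ρ hρ => ?_⟩
    rw [acc_smul, acc_one hρ, mul_one, binomialExpectation]
  | succ k ih =>
    obtain ⟨Q, hQ, haccQ⟩ := ih hf0 hf1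
    obtain ⟨Q', hQ', haccQ'⟩ := ih (fun j => hf0 (j + 1)) (fun j => hf1 (j + 1))
    rw [Nat.mul_succ, Nat.add_comm]
    refine ⟨_, hM.tensor_add_one_sub_tensor hQ hQ', fun ρ hρ => ?_⟩
    rw [acc_add, acc_tensor hM.1 hQ.1 hρ.1, acc_tensor hM.2 hQ'.1 hρ.1, acc_sub, acc_one hρ,
      haccQ ρ hρ, haccQ' ρ hρ, binomialExpectation]

end Amplification

section PartialTrace

variable {d N : ℕ}

theorem tpow_ptraceB (ρ : Matrix (Fin d × Fin d) (Fin d × Fin d) ℂ)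
    (x y : Fin N → Fin d) :
    tpow (ptraceB ρ) N x y =
      ∑ z : Fin N → Fin d, tpow ρ N (fun i => (x i, z i)) fun i => (y i, z i) := by
  simp [tpow, ptraceB, Finset.prod_univ_sum]

theorem acc_localA (M : Matrix (Fin N → Fin d) (Fin N → Fin d) ℂ)
    (ρ : Matrix (Fin d × Fin d) (Fin d × Fin d) ℂ) : acc (localA M) ρ = acc M (ptraceB ρ) := by
  have hsplit (g : (Fin N → Fin d × Fin d) → ℂ) :
      ∑ x, g x = ∑ u : Fin N → Fin d, ∑ v : Fin N → Fin d, g fun i => (u i, v i) := by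
    rw [← (Equiv.arrowProdEquivProdArrow _ _ _).symm.sum_comp, Fintype.sum_prod_type]
    rfl
  simp only [acc, Matrix.trace, Matrix.diag_apply, Matrix.mul_apply, hsplit, tpow_ptraceB,
    localA, Matrix.of_apply, mul_ite, mul_one, mul_zero, ite_mul, zero_mul, Finset.sum_ite_eq,
    Finset.mem_univ, if_true, Finset.mul_sum]
  exact congrArg Complex.re (Finset.sum_congr rfl fun _ _ => Finset.sum_comm)

theorem isDensity_ptraceB {ρ : Matrix (Fin d × Fin d) (Fin d × Fin d) ℂ} (hρ : IsDensity ρ) :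
    IsDensity (ptraceB ρ) := by
  have hsum : ptraceB ρ = ∑ j, ρ.submatrix (fun a => (a, j)) fun a => (a, j) := by
    ext a b
    simp [ptraceB, Matrix.sum_apply]
  refine ⟨hsum ▸ Matrix.posSemidef_sum _ fun j _ => hρ.1.submatrix _, ?_⟩
  rw [← hρ.2, Matrix.trace, Matrix.trace, Fintype.sum_prod_type]
  rfl

end PartialTrace

section FixedPoint

-- The point of minimal norm is unique by strict convexity, hence fixed.
theorem exists_mem_forall_fixed_of_norm_preserving {V : Type*} [NormedAddCommGroup V]
    [NormedSpace ℝ V] [StrictConvexSpace ℝ V] [ProperSpace V] {K : Set V} (hK : K.Nonempty)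
    (hclosed : IsClosed K) (hconvex : Convex ℝ K) :
    ∃ x ∈ K, ∀ f : V → V, Set.MapsTo f K K → (∀ y, ‖f y‖ = ‖y‖) → f x = x := by
  obtain ⟨x, hx, hmin⟩ := hclosed.exists_infDist_eq_dist hK 0
  refine ⟨x, hx, fun f hf hnorm => ?_⟩
  by_contra hne
  have hmid : (1 / 2 : ℝ) • (x + f x) ∈ K := by
    rw [smul_add]
    exact hconvex hx (hf hx) (by norm_num) (by norm_num) (by norm_num)
  have hlt := (norm_midpoint_lt_iff (hnorm x).symm).mpr (Ne.symm hne)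
  have hle := Metric.infDist_le_dist_of_mem hmid (x := 0)
  rw [hmin, dist_zero_left, dist_zero_left] at hle
  exact hle.not_gt hlt

variable {κ : Type*} [Fintype κ]

/-- Square matrices as a Euclidean space, with the Frobenius inner product. -/
noncomputable def matrixEquivEuclidean (κ : Type*) [Fintype κ] :
    Matrix κ κ ℂ ≃ₗ[ℝ] EuclideanSpace ℂ (κ × κ) :=
  ((LinearEquiv.curry ℂ ℂ κ κ).symm.trans (WithLp.linearEquiv 2 ℂ (κ × κ → ℂ)).symm).restrictScalars
    ℝ

theorem norm_matrixEquivEuclidean_sq (A : Matrix κ κ ℂ) :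
    ‖matrixEquivEuclidean κ A‖ ^ 2 = (A * Aᴴ).trace.re := by
  rw [EuclideanSpace.norm_sq_eq, Fintype.sum_prod_type]
  simp only [Matrix.trace, Matrix.diag_apply, Matrix.mul_apply, Matrix.conjTranspose_apply,
    RCLike.star_def, Complex.mul_conj, Complex.re_sum, Complex.ofReal_re,
    Complex.normSq_eq_norm_sq]
  rfl

variable [DecidableEq κ]

theorem norm_matrixEquivEuclidean_conj {U : Matrix κ κ ℂ} (hU : U ∈ Matrix.unitaryGroup κ ℂ)
    (A : Matrix κ κ ℂ) :
    ‖matrixEquivEuclidean κ (U * A * Uᴴ)‖ = ‖matrixEquivEuclidean κ A‖ := by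
  have hUU : Uᴴ * U = 1 := Matrix.mem_unitaryGroup_iff'.mp hU
  have hsq : (U * A * Uᴴ) * (U * A * Uᴴ)ᴴ = U * (A * (Uᴴ * U) * Aᴴ * Uᴴ) := by
    simp only [Matrix.conjTranspose_mul, Matrix.conjTranspose_conjTranspose, mul_assoc]
  rw [← sq_eq_sq₀ (norm_nonneg _) (norm_nonneg _), norm_matrixEquivEuclidean_sq,
    norm_matrixEquivEuclidean_sq, hsq, Matrix.trace_mul_comm, mul_assoc, hUU, mul_one, mul_one]

theorem exists_mem_forall_commute_of_conj_mem {K : Set (Matrix κ κ ℂ)} (hK : K.Nonempty)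
    (hclosed : IsClosed K) (hconvex : Convex ℝ K) :
    ∃ T ∈ K, ∀ U ∈ Matrix.unitaryGroup κ ℂ, (∀ S ∈ K, U * S * Uᴴ ∈ K) → Commute U T := by
  let Φ := matrixEquivEuclidean κ
  have hcont : Continuous Φ.symm := LinearMap.continuous_of_finiteDimensional Φ.symm.toLinearMap
  obtain ⟨y, hy, hfix⟩ := exists_mem_forall_fixed_of_norm_preserving
    (hK.preimage Φ.symm.surjective) (hclosed.preimage hcont)
    (hconvex.linear_preimage Φ.symm.toLinearMap)
  refine ⟨Φ.symm y, hy, fun U hU hUK => ?_⟩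
  have hinv : Φ (U * Φ.symm y * Uᴴ) = y := by
    refine hfix (fun z => Φ (U * Φ.symm z * Uᴴ)) (fun z hz => ?_) fun z => ?_
    · simpa using hUK _ hz
    · rw [norm_matrixEquivEuclidean_conj hU, Φ.apply_symm_apply]
  calc U * Φ.symm y = U * Φ.symm y * (Uᴴ * U) := by
        rw [← Matrix.star_eq_conjTranspose, Matrix.mem_unitaryGroup_iff'.mp hU, mul_one]
    _ = U * Φ.symm y * Uᴴ * U := by rw [← mul_assoc]
    _ = Φ.symm y * U := by rw [← Φ.symm_apply_eq.mpr hinv.symm]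

end FixedPoint

section Twirl

theorem isClosed_setOf_posSemidef {κ : Type*} [Finite κ] :
    IsClosed {T : Matrix κ κ ℂ | T.PosSemidef} := by
  have := Fintype.ofFinite κ
  simp only [Matrix.posSemidef_iff_dotProduct_mulVec, Matrix.IsHermitian, Set.ofPred_and,
    Set.ofPred_forall]
  exact (isClosed_eq (by fun_prop) (by fun_prop)).inter
    (isClosed_iInter fun x => isClosed_le (by fun_prop) (by fun_prop))

variable {ι : Type*} [Fintype ι] [DecidableEq ι] {N : ℕ} {Pyes Pno : Set (Matrix ι ι ℂ)} {c s : ℝ}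

/-- `T` is a tester with completeness `c` and soundness `s` for the property `(Pyes, Pno)`. -/
def IsTesterFor (Pyes Pno : Set (Matrix ι ι ℂ)) (c s : ℝ)
    (T : Matrix (Fin N → ι) (Fin N → ι) ℂ) : Prop :=
  IsTester T ∧ (∀ ρ ∈ Pyes, c ≤ acc T ρ) ∧ ∀ ρ ∈ Pno, acc T ρ ≤ s

theorem isClosed_setOf_isTesterFor :
    IsClosed {T : Matrix (Fin N → ι) (Fin N → ι) ℂ | IsTesterFor Pyes Pno c s T} := by
  have hacc (ρ : Matrix ι ι ℂ) :
      Continuous fun T : Matrix (Fin N → ι) (Fin N → ι) ℂ => acc T ρ := by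
    unfold acc; fun_prop
  simp only [IsTesterFor, IsTester, Set.ofPred_and, Set.ofPred_forall]
  refine (isClosed_setOf_posSemidef.inter (isClosed_setOf_posSemidef.preimage (by fun_prop))).inter
    (.inter ?_ ?_)
  · exact isClosed_biInter fun ρ _ => isClosed_le continuous_const (hacc ρ)
  · exact isClosed_biInter fun ρ _ => isClosed_le (hacc ρ) continuous_const

theorem convex_setOf_isTester {κ : Type*} [Fintype κ] [DecidableEq κ] :
    Convex ℝ {T : Matrix κ κ ℂ | IsTester T} := by
  intro T hT S hS u v hu hv huv
  refine ⟨(hT.1.smul hu).add (hS.1.smul hv), ?_⟩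
  have hsplit : 1 - (u • T + v • S) = u • (1 - T) + v • (1 - S) := by
    conv_lhs => rw [← one_smul ℝ (1 : Matrix κ κ ℂ), ← huv]
    module
  rw [hsplit]
  exact (hT.2.smul hu).add (hS.2.smul hv)

theorem convex_setOf_isTesterFor :
    Convex ℝ {T : Matrix (Fin N → ι) (Fin N → ι) ℂ | IsTesterFor Pyes Pno c s T} := by
  have hlin (ρ : Matrix ι ι ℂ) :
      IsLinearMap ℝ fun T : Matrix (Fin N → ι) (Fin N → ι) ℂ => acc T ρ :=
    ⟨fun T S => acc_add T S ρ, fun r T => acc_smul r T ρ⟩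
  simp only [IsTesterFor, Set.ofPred_and, Set.ofPred_forall]
  refine convex_setOf_isTester.inter (.inter ?_ ?_)
  · exact convex_iInter₂ fun ρ _ => convex_halfSpace_ge (hlin ρ) c
  · exact convex_iInter₂ fun ρ _ => convex_halfSpace_le (hlin ρ) s

theorem IsTester.conj {κ : Type*} [Fintype κ] [DecidableEq κ] {T U : Matrix κ κ ℂ}
    (hT : IsTester T) (hU : U ∈ Matrix.unitaryGroup κ ℂ) : IsTester (U * T * Uᴴ) := by
  have hcompl : 1 - U * T * Uᴴ = U * (1 - T) * Uᴴ := by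
    rw [mul_sub, sub_mul, mul_one, ← Matrix.star_eq_conjTranspose,
      Matrix.mem_unitaryGroup_iff.mp hU]
  exact ⟨hT.1.mul_mul_conjTranspose_same U, hcompl ▸ hT.2.mul_mul_conjTranspose_same U⟩

theorem tpow_mem_unitaryGroup {U : Matrix ι ι ℂ} (hU : U ∈ Matrix.unitaryGroup ι ℂ) (n : ℕ) :
    tpow U n ∈ Matrix.unitaryGroup (Fin n → ι) ℂ := by
  rw [Matrix.mem_unitaryGroup_iff, Matrix.star_eq_conjTranspose, ← tpow_conjTranspose, ← tpow_mul,
    ← Matrix.star_eq_conjTranspose, Matrix.mem_unitaryGroup_iff.mp hU, one_tpow]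

theorem exists_isTesterFor_forall_commute_tpow {𝒲 : Set (Matrix ι ι ℂ)}
    (h𝒲 : 𝒲 ⊆ Matrix.unitaryGroup ι ℂ) (hyes : ∀ W ∈ 𝒲, ∀ ρ ∈ Pyes, Wᴴ * ρ * W ∈ Pyes)
    (hno : ∀ W ∈ 𝒲, ∀ ρ ∈ Pno, Wᴴ * ρ * W ∈ Pno)
    (hT : ∃ T : Matrix (Fin N → ι) (Fin N → ι) ℂ, IsTesterFor Pyes Pno c s T) :
    ∃ T : Matrix (Fin N → ι) (Fin N → ι) ℂ, IsTesterFor Pyes Pno c s T ∧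
      ∀ W ∈ 𝒲, Commute (tpow W N) T := by
  obtain ⟨T, hTfor, hcomm⟩ := exists_mem_forall_commute_of_conj_mem hT isClosed_setOf_isTesterFor
    convex_setOf_isTesterFor
  refine ⟨T, hTfor, fun W hW => hcomm _ (tpow_mem_unitaryGroup (h𝒲 hW) N) fun S hS => ?_⟩
  refine ⟨hS.1.conj (tpow_mem_unitaryGroup (h𝒲 hW) N), fun ρ hρ => ?_, fun ρ hρ => ?_⟩
  · exact (hS.2.1 _ (hyes W hW ρ hρ)).trans_eq (acc_conj S W ρ).symm
  · exact (acc_conj S W ρ).trans_le (hS.2.2 _ (hno W hW ρ hρ))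

/-- Invariance of a set of bipartite states under Bob's local unitaries. -/
def IsBobInvariant {α β : Type*} [Fintype α] [DecidableEq α] [Fintype β] [DecidableEq β]
    (P : Set (Matrix (α × β) (α × β) ℂ)) : Prop :=
  ∀ U ∈ Matrix.unitaryGroup β ℂ, ∀ ρ ∈ P,
    ((1 : Matrix α α ℂ) ⊗ₖ U) * ρ * ((1 : Matrix α α ℂ) ⊗ₖ U)ᴴ ∈ P

theorem exists_isTesterFor_forall_commute_bipartite_one {α β : Type*} [Fintype α] [DecidableEq α]
    [Fintype β] [DecidableEq β] {Pyes Pno : Set (Matrix (α × β) (α × β) ℂ)}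
    (hyes : IsBobInvariant Pyes) (hno : IsBobInvariant Pno)
    (hT : ∃ T : Matrix (Fin N → α × β) (Fin N → α × β) ℂ, IsTesterFor Pyes Pno c s T) :
    ∃ T : Matrix (Fin N → α × β) (Fin N → α × β) ℂ, IsTesterFor Pyes Pno c s T ∧
      ∀ U ∈ Matrix.unitaryGroup β ℂ, Commute (bipartite 1 (tpow U N)) T := by
  have hconj {P : Set (Matrix (α × β) (α × β) ℂ)} (hP : IsBobInvariant P) :
      ∀ W ∈ ((1 : Matrix α α ℂ) ⊗ₖ ·) '' (Matrix.unitaryGroup β ℂ), ∀ ρ ∈ P, Wᴴ * ρ * W ∈ P := by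
    rintro _ ⟨U, hU, rfl⟩ ρ hρ
    simpa [Matrix.conjTranspose_kronecker, Matrix.star_eq_conjTranspose] using
      hP (star U) (Unitary.star_mem hU) ρ hρ
  obtain ⟨T, hTfor, hcomm⟩ := exists_isTesterFor_forall_commute_tpow
    (Set.image_subset_iff.mpr fun U hU => Matrix.kronecker_mem_unitary (one_mem _) hU)
    (hconj hyes) (hconj hno) hT
  refine ⟨T, hTfor, fun U hU => ?_⟩
  have h := hcomm _ ⟨U, hU, rfl⟩
  rwa [tpow_kronecker, one_tpow] at h

end Twirl

section WeylUnitaryTrick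

variable {ι : Type*} {N : ℕ}

theorem tpow_add_smul_mem_of_infinite [Finite ι]
    (W : Submodule ℂ (Matrix (Fin N → ι) (Fin N → ι) ℂ)) (A B : Matrix ι ι ℂ) {S : Set ℂ}
    (hS : S.Infinite) (hmem : ∀ t ∈ S, tpow (A + t • B) N ∈ W) (z : ℂ) :
    tpow (A + z • B) N ∈ W := by
  classical
  have := Fintype.ofFinite ι
  by_contra hz
  obtain ⟨f, hfz, hfW⟩ := Submodule.exists_le_ker_of_notMem hz
  let p : Polynomial ℂ := ∑ x : Fin N → ι, ∑ y : Fin N → ι,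
    (∏ i, (.C (A (x i) (y i)) + .X * .C (B (x i) (y i)))) * .C (f (Matrix.single x y 1))
  have hp (t : ℂ) : p.eval t = f (tpow (A + t • B) N) := by
    rw [Matrix.matrix_eq_sum_single (tpow (A + t • B) N)]
    simp only [p, Polynomial.eval_finsetSum, Polynomial.eval_mul, Polynomial.eval_prod,
      Polynomial.eval_add, Polynomial.eval_C, Polynomial.eval_X, map_sum]
    refine Finset.sum_congr rfl fun x _ => Finset.sum_congr rfl fun y _ => ?_
    rw [← smul_eq_mul, ← map_smul, Matrix.smul_single, smul_eq_mul, mul_one]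
    rfl
  have hp0 : p = 0 := p.eq_zero_of_infinite_isRoot <| hS.mono fun t ht =>
    (hp t).trans (LinearMap.mem_ker.mp (hfW (hmem t ht)))
  exact hfz (by rw [← hp, hp0, Polynomial.eval_zero])

theorem infinite_sphere_complex : (Metric.sphere (0 : ℂ) 1).Infinite := by
  have hconn : IsPreconnected (Metric.sphere (0 : ℂ) 1) :=
    isPreconnected_sphere (by rw [Complex.rank_real_complex]; exact Nat.one_lt_ofNat) 0 1
  exact hconn.infinite_of_nontrivial ⟨1, by simp, -1, by simp, by norm_num⟩

variable [Fintype ι] [DecidableEq ι]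

theorem diagonal_mem_unitaryGroup {z : ι → ℂ} (hz : ∀ i, ‖z i‖ = 1) :
    Matrix.diagonal z ∈ Matrix.unitaryGroup ι ℂ := by
  rw [Matrix.mem_unitaryGroup_iff, Matrix.star_eq_conjTranspose, Matrix.diagonal_conjTranspose,
    Matrix.diagonal_mul_diagonal, ← Matrix.diagonal_one]
  refine congrArg _ (funext fun i => ?_)
  simp [Complex.mul_conj, Complex.normSq_eq_norm_sq, hz i]

-- Free the diagonal entries from the unit circle one at a time.
theorem tpow_diagonal_mem_of_unitary_mem (W : Submodule ℂ (Matrix (Fin N → ι) (Fin N → ι) ℂ))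
    (hW : ∀ U ∈ Matrix.unitaryGroup ι ℂ, tpow U N ∈ W) (z : ι → ℂ) :
    tpow (Matrix.diagonal z) N ∈ W := by
  suffices h : ∀ (F : Finset ι) (z : ι → ℂ), (∀ i ∉ F, ‖z i‖ = 1) →
      tpow (Matrix.diagonal z) N ∈ W from h Finset.univ z (by simp)
  intro F
  induction F using Finset.induction with
  | empty => exact fun z hz => hW _ (diagonal_mem_unitaryGroup fun i => hz i (by simp))
  | insert a F _ ih =>
    intro z hz
    have hline (t : ℂ) : Matrix.diagonal (Function.update z a t) =
        Matrix.diagonal (Function.update z a 0) + t • Matrix.diagonal (Pi.single a 1) := by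
      rw [← Matrix.diagonal_smul, Matrix.diagonal_add]
      refine congrArg _ (funext fun i => ?_)
      rcases eq_or_ne i a with rfl | hi <;> simp [*]
    rw [← Function.update_eq_self a z, hline]
    refine tpow_add_smul_mem_of_infinite W _ _ infinite_sphere_complex (fun t ht => ?_) _
    rw [← hline]
    refine ih _ fun i hi => ?_
    rcases eq_or_ne i a with rfl | hia
    · simpa using ht
    · simpa [hia] using hz i (by simp [hia, hi])

variable (A : Subalgebra ℂ (Matrix (Fin N → ι) (Fin N → ι) ℂ))

theorem tpow_mem_of_isHermitian_of_unitary_mem (hA : ∀ U ∈ Matrix.unitaryGroup ι ℂ, tpow U N ∈ A)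
    {H : Matrix ι ι ℂ} (hH : H.IsHermitian) : tpow H N ∈ A := by
  rw [hH.spectral_theorem, Unitary.conjStarAlgAut_apply, tpow_mul, tpow_mul]
  exact mul_mem (mul_mem (hA _ hH.eigenvectorUnitary.2)
    (tpow_diagonal_mem_of_unitary_mem A.toSubmodule hA _)) (hA _ (star hH.eigenvectorUnitary).2)

theorem tpow_mem_of_unitary_mem (hA : ∀ U ∈ Matrix.unitaryGroup ι ℂ, tpow U N ∈ A)
    (X : Matrix ι ι ℂ) : tpow X N ∈ A := by
  rw [← realPart_add_I_smul_imaginaryPart X]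
  refine tpow_add_smul_mem_of_infinite A.toSubmodule _ _
    (Set.infinite_range_of_injective Complex.ofReal_injective) ?_ Complex.I
  rintro _ ⟨t, rfl⟩
  refine tpow_mem_of_isHermitian_of_unitary_mem A hA (IsSelfAdjoint.add (realPart X).2 ?_)
  rw [Complex.coe_smul]
  exact (IsSelfAdjoint.all t).smul (imaginaryPart X).2

end WeylUnitaryTrick

section PositiveFunctional

variable {κ : Type*} [Fintype κ]

-- The trace pairing is nondegenerate on a subspace closed under `ᴴ`, as `tr (Rᴴ R) = 0` forces
-- `R = 0`.
theorem exists_mem_forall_trace_mul_eq (W : Submodule ℂ (Matrix κ κ ℂ)) (hW : ∀ X ∈ W, Xᴴ ∈ W)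
    (Q : Matrix κ κ ℂ) : ∃ R ∈ W, ∀ Z ∈ W, (Z * R).trace = (Z * Q).trace := by
  let Φ : W →ₗ[ℂ] Module.Dual ℂ W := LinearMap.mk₂ ℂ
    (fun R Z => ((Z : Matrix κ κ ℂ) * R).trace) (by simp [mul_add]) (by simp) (by simp [add_mul])
    (by simp)
  have hinj : Function.Injective Φ := by
    refine (injective_iff_map_eq_zero Φ).mpr fun R hR => Subtype.ext ?_
    exact Matrix.trace_conjTranspose_mul_self_eq_zero_iff.mp
      (LinearMap.congr_fun hR ⟨_, hW R R.2⟩)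
  have hsurj : Function.Surjective Φ :=
    (LinearMap.injective_iff_surjective_of_finrank_eq_finrank Subspace.dual_finrank_eq.symm).mp hinj
  let traceMulQ : Module.Dual ℂ W :=
    Matrix.traceLinearMap κ ℂ ℂ ∘ₗ LinearMap.mulRight ℂ Q ∘ₗ W.subtype
  obtain ⟨R, hR⟩ := hsurj traceMulQ
  exact ⟨R, R.2, fun Z hZ => LinearMap.congr_fun hR ⟨Z, hZ⟩⟩

variable [DecidableEq κ] {A : StarSubalgebra ℂ (Matrix κ κ ℂ)} {R : Matrix κ κ ℂ}

-- The polarization `4 K = (K + 1)² - (K - 1)²`.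
theorem im_trace_mul_eq_zero_of_isHermitian (hpos : ∀ X ∈ A, 0 ≤ (Xᴴ * X * R).trace)
    {K : Matrix κ κ ℂ} (hKA : K ∈ A) (hK : K.IsHermitian) : (K * R).trace.im = 0 := by
  have hplus := hpos (K + 1) (add_mem hKA (one_mem A))
  have hminus := hpos (K - 1) (sub_mem hKA (one_mem A))
  rw [(hK.add Matrix.isHermitian_one).eq] at hplus
  rw [(hK.sub Matrix.isHermitian_one).eq] at hminus
  have hpolar : (K + 1) * (K + 1) * R - (K - 1) * (K - 1) * R = 4 • (K * R) := by
    noncomm_ring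
  have him := congrArg (fun M => M.trace.im) hpolar
  simp only [Matrix.trace_sub, Matrix.trace_smul, Complex.sub_im, ← (Complex.nonneg_iff.mp hplus).2,
    ← (Complex.nonneg_iff.mp hminus).2] at him
  simpa using him.symm

theorem isHermitian_of_forall_trace_conjTranspose_mul_self_mul_nonneg (hRA : R ∈ A)
    (hpos : ∀ X ∈ A, 0 ≤ (Xᴴ * X * R).trace) : R.IsHermitian := by
  let H : Matrix κ κ ℂ := realPart R
  let K : Matrix κ κ ℂ := imaginaryPart R
  have hR : R = H + Complex.I • K := (realPart_add_I_smul_imaginaryPart R).symm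
  have hH : H.IsHermitian := (realPart R).2
  have hK : K.IsHermitian := (imaginaryPart R).2
  have hKA : K ∈ A := by
    simp only [K, imaginaryPart_apply_coe, ← Complex.coe_smul]
    exact A.smul_mem (A.smul_mem (sub_mem hRA (star_mem hRA)) _) _
  have hKH : (K * H).trace.im = 0 := by
    rw [← Complex.conj_eq_iff_im, ← Complex.star_def, ← Matrix.trace_conjTranspose,
      Matrix.conjTranspose_mul, hH.eq, hK.eq, Matrix.trace_mul_comm]
  have hKK : (Kᴴ * K).trace = 0 := by
    have h := im_trace_mul_eq_zero_of_isHermitian hpos hKA hK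
    rw [hR, mul_add, Matrix.trace_add, Complex.add_im, hKH, zero_add, mul_smul_comm,
      Matrix.trace_smul, smul_eq_mul, Complex.I_mul_im] at h
    rw [hK.eq]
    have hnonneg := (Matrix.posSemidef_conjTranspose_mul_self K).trace_nonneg
    rw [hK.eq] at hnonneg
    exact Complex.ext h (Complex.nonneg_iff.mp hnonneg).2.symm
  rwa [hR, Matrix.trace_conjTranspose_mul_self_eq_zero_iff.mp hKK, smul_zero, add_zero]

open scoped MatrixOrder in
-- Test positivity against the negative part `X = R⁻`, for which `XᴴXR = -X³`.
theorem posSemidef_of_forall_trace_conjTranspose_mul_self_mul_nonneg (hRA : R ∈ A)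
    (hpos : ∀ X ∈ A, 0 ≤ (Xᴴ * X * R).trace) : R.PosSemidef := by
  have hR : IsSelfAdjoint R :=
    isHermitian_of_forall_trace_conjTranspose_mul_self_mul_nonneg hRA hpos
  have hmem : R⁻ ∈ A := by
    have : IsClosed (A : Set (Matrix κ κ ℂ)) :=
      A.toSubalgebra.toSubmodule.closed_of_finiteDimensional
    exact cfcₙ_mem (𝕜' := ℂ) _ hRA
  have hneg : (R⁻).PosSemidef := Matrix.nonneg_iff_posSemidef.mp (CFC.negPart_nonneg R)
  obtain ⟨C, hC⟩ := posSemidef_iff_exists_conjTranspose_mul_self.mp hneg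
  have hcube : (R⁻)ᴴ * R⁻ * R = -((C * R⁻)ᴴ * (C * R⁻)) := by
    calc (R⁻)ᴴ * R⁻ * R = R⁻ * R⁻ * (R⁺ - R⁻) := by
          rw [hneg.isHermitian.eq, CFC.posPart_sub_negPart R hR]
      _ = -(R⁻ * R⁻ * R⁻) := by
          rw [mul_sub, mul_assoc, CFC.negPart_mul_posPart, mul_zero, zero_sub]
      _ = -((R⁻)ᴴ * (Cᴴ * C) * R⁻) := by rw [← hC, hneg.isHermitian.eq]
      _ = -((C * R⁻)ᴴ * (C * R⁻)) := by
          simp only [Matrix.conjTranspose_mul, mul_assoc]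
  have hzero : C * R⁻ = 0 := by
    rw [← Matrix.trace_conjTranspose_mul_self_eq_zero_iff]
    refine le_antisymm ?_ (Matrix.posSemidef_conjTranspose_mul_self _).trace_nonneg
    simpa [hcube] using hpos _ hmem
  have hsq : (R⁻)ᴴ * R⁻ = 0 := by
    rw [hneg.isHermitian.eq]; nth_rewrite 1 [hC]; rw [mul_assoc, hzero, mul_zero]
  rw [← Matrix.nonneg_iff_posSemidef, ← CFC.negPart_eq_zero_iff R hR]
  exact Matrix.conjTranspose_mul_self_eq_zero.mp hsq

end PositiveFunctional

section LocalTester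

variable {κ : Type*} [Fintype κ] [DecidableEq κ] {T : Matrix (κ × κ) (κ × κ) ℂ}

/-- The star algebra of operators `X` on the second tensor factor for which `1 ⊗ X` commutes with
the Hermitian operator `T`. -/
def rightCommutant (hT : T.IsHermitian) : StarSubalgebra ℂ (Matrix κ κ ℂ) where
  carrier := {X | Commute ((1 : Matrix κ κ ℂ) ⊗ₖ X) T}
  mul_mem' {X Y} hX hY := by
    have h := Commute.mul_left hX hY
    rwa [← Matrix.mul_kronecker_mul, one_mul] at h
  add_mem' {X Y} hX hY := by
    have h := Commute.add_left hX hY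
    rwa [← Matrix.kronecker_add] at h
  algebraMap_mem' r := by
    rw [Set.mem_ofPred_eq, Algebra.algebraMap_eq_smul_one, Matrix.kronecker_smul,
      Matrix.one_kronecker_one]
    exact (Commute.one_left T).smul_left r
  star_mem' {X} hX := by
    have h := Commute.star_star hX
    rwa [Matrix.star_eq_conjTranspose, Matrix.star_eq_conjTranspose, Matrix.conjTranspose_kronecker,
      Matrix.conjTranspose_one, hT.eq] at h

theorem mem_rightCommutant {hT : T.IsHermitian} {X : Matrix κ κ ℂ} :
    X ∈ rightCommutant hT ↔ Commute ((1 : Matrix κ κ ℂ) ⊗ₖ X) T :=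
  Iff.rfl

theorem mulVec_vec_of_commute {X Q : Matrix κ κ ℂ} (hX : Commute ((1 : Matrix κ κ ℂ) ⊗ₖ X) T)
    (hQ : Q.vec = T *ᵥ (1 : Matrix κ κ ℂ).vec) : T *ᵥ X.vec = (X * Q).vec := by
  have hvec (Y : Matrix κ κ ℂ) : (X * Y).vec = ((1 : Matrix κ κ ℂ) ⊗ₖ X) *ᵥ Y.vec := by
    rw [Matrix.kronecker_mulVec_vec, Matrix.transpose_one, mul_one]
  calc T *ᵥ X.vec = T *ᵥ ((1 : Matrix κ κ ℂ) ⊗ₖ X) *ᵥ (1 : Matrix κ κ ℂ).vec := by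
        rw [← hvec, mul_one]
    _ = ((1 : Matrix κ κ ℂ) ⊗ₖ X) *ᵥ T *ᵥ (1 : Matrix κ κ ℂ).vec := by
        rw [Matrix.mulVec_mulVec, Matrix.mulVec_mulVec, hX.eq]
    _ = (X * Q).vec := by rw [← hQ, hvec]

theorem exists_forall_star_vec_dotProduct_mulVec_vec_eq (hT : T.IsHermitian) :
    ∃ R ∈ rightCommutant hT, ∀ X ∈ rightCommutant hT,
      star X.vec ⬝ᵥ T *ᵥ X.vec = (Xᴴ * X * R).trace := by
  obtain ⟨Q, hQ⟩ := Matrix.vec_bijective.surjective (T *ᵥ (1 : Matrix κ κ ℂ).vec)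
  obtain ⟨R, hRA, hR⟩ := exists_mem_forall_trace_mul_eq
    (rightCommutant hT).toSubalgebra.toSubmodule (fun X hX => (rightCommutant hT).star_mem' hX) Q
  refine ⟨R, hRA, fun X hX => ?_⟩
  have hXX : star X * X ∈ rightCommutant hT := mul_mem (star_mem hX) hX
  rw [← Matrix.star_eq_conjTranspose, hR _ hXX, mulVec_vec_of_commute (mem_rightCommutant.mp hX) hQ,
    Matrix.star_vec_dotProduct_vec, mul_assoc, Matrix.star_eq_conjTranspose]

theorem exists_isTester_forall_star_vec_dotProduct_mulVec_vec_eq (hT : IsTester T) :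
    ∃ M : Matrix κ κ ℂ, IsTester M ∧ ∀ X : Matrix κ κ ℂ, Commute ((1 : Matrix κ κ ℂ) ⊗ₖ X) T →
      star X.vec ⬝ᵥ (M ⊗ₖ (1 : Matrix κ κ ℂ)) *ᵥ X.vec = star X.vec ⬝ᵥ T *ᵥ X.vec := by
  obtain ⟨R, hRA, hR⟩ := exists_forall_star_vec_dotProduct_mulVec_vec_eq hT.1.isHermitian
  have hRpos : R.PosSemidef :=
    posSemidef_of_forall_trace_conjTranspose_mul_self_mul_nonneg hRA fun X hX => by
      rw [← hR X hX]
      exact hT.1.dotProduct_mulVec_nonneg _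
  have hRcompl : (1 - R).PosSemidef :=
    posSemidef_of_forall_trace_conjTranspose_mul_self_mul_nonneg (sub_mem (one_mem _) hRA)
      fun X hX => by
        have hform : star X.vec ⬝ᵥ (1 - T) *ᵥ X.vec = (Xᴴ * X * (1 - R)).trace := by
          rw [Matrix.sub_mulVec, Matrix.one_mulVec, dotProduct_sub, Matrix.star_vec_dotProduct_vec,
            hR X hX, mul_sub, mul_one, Matrix.trace_sub]
        rw [← hform]
        exact hT.2.dotProduct_mulVec_nonneg _
  refine ⟨Rᵀ, ⟨hRpos.transpose, by simpa using hRcompl.transpose⟩, fun X hX => ?_⟩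
  rw [hR X (mem_rightCommutant.mpr hX), Matrix.kronecker_mulVec_vec, one_mul,
    Matrix.transpose_transpose, Matrix.star_vec_dotProduct_vec, mul_assoc]

theorem outer_eq_vecMulVec {ι : Type*} (ψ : ι → ℂ) : outer ψ = Matrix.vecMulVec ψ (star ψ) :=
  rfl

theorem tpow_outer {ι : Type*} (ψ : ι → ℂ) (N : ℕ) :
    tpow (outer ψ) N = outer fun x : Fin N → ι => ∏ i, ψ (x i) := by
  ext; simp [tpow, outer, Finset.prod_mul_distrib]

theorem acc_outer {ι : Type*} [Fintype ι] {N : ℕ} (T : Matrix (Fin N → ι) (Fin N → ι) ℂ)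
    (ψ : ι → ℂ) :
    acc T (outer ψ) = (star (fun x => ∏ i, ψ (x i)) ⬝ᵥ T *ᵥ fun x => ∏ i, ψ (x i)).re := by
  rw [acc, tpow_outer, outer_eq_vecMulVec, Matrix.mul_vecMulVec, Matrix.trace_vecMulVec,
    dotProduct_comm]

variable {ι : Type*} [Fintype ι] {N : ℕ}

theorem acc_submatrix_outer
    (S : Matrix ((Fin N → ι) × (Fin N → ι)) ((Fin N → ι) × (Fin N → ι)) ℂ) (ψ : ι × ι → ℂ) :
    acc (S.submatrix (Equiv.arrowProdEquivProdArrow _ _ _) (Equiv.arrowProdEquivProdArrow _ _ _))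
      (outer ψ) = (star (tpow (Matrix.of fun b a => ψ (a, b)) N).vec ⬝ᵥ
        S *ᵥ (tpow (Matrix.of fun b a => ψ (a, b)) N).vec).re := by
  let e := Equiv.arrowProdEquivProdArrow (Fin N) (fun _ => ι) (fun _ => ι)
  have hvec : (fun x => ∏ i, ψ (x i)) = (tpow (Matrix.of fun b a => ψ (a, b)) N).vec ∘ e := rfl
  rw [acc_outer, hvec, Matrix.submatrix_mulVec_equiv, Function.comp_assoc, Equiv.self_comp_symm,
    Function.comp_id]
  exact congrArg Complex.re (comp_equiv_dotProduct_comp_equiv (star (Matrix.vec _)) (S *ᵥ _) e)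

variable [DecidableEq ι]

theorem exists_isTester_acc_bipartite_one_outer_eq
    {T : Matrix (Fin N → ι × ι) (Fin N → ι × ι) ℂ} (hT : IsTester T)
    (hcomm : ∀ U ∈ Matrix.unitaryGroup ι ℂ, Commute (bipartite 1 (tpow U N)) T) :
    ∃ M : Matrix (Fin N → ι) (Fin N → ι) ℂ, IsTester M ∧
      ∀ ψ : ι × ι → ℂ, acc (bipartite M 1) (outer ψ) = acc T (outer ψ) := by
  let e := Equiv.arrowProdEquivProdArrow (Fin N) (fun _ => ι) (fun _ => ι)
  have hS := hT.submatrix_equiv e.symm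
  have hTS : T = (T.submatrix e.symm e.symm).submatrix e e := by simp
  obtain ⟨M, hM, heq⟩ := exists_isTester_forall_star_vec_dotProduct_mulVec_vec_eq hS
  refine ⟨M, hM, fun ψ => ?_⟩
  have hmem := tpow_mem_of_unitary_mem (rightCommutant hS.1.isHermitian).toSubalgebra
    (fun U hU => ?_) (Matrix.of fun b a => ψ (a, b))
  · rw [hTS, bipartite, acc_submatrix_outer, acc_submatrix_outer, heq _ hmem]
  · have h := (hcomm U hU).map (Matrix.reindexAlgEquiv ℂ ℂ e)
    rw [bipartite, Matrix.coe_reindexAlgEquiv, Matrix.reindex_apply, Matrix.submatrix_submatrix,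
      Equiv.self_comp_symm, Matrix.submatrix_id_id] at h
    exact mem_rightCommutant.mpr h

end LocalTester

section PureComponent

variable {ι : Type*}

theorem outer_posSemidef [Finite ι] (ψ : ι → ℂ) : (outer ψ).PosSemidef :=
  Matrix.posSemidef_vecMulVec_self_star ψ

variable [Fintype ι]

theorem IsUnitVec.dotProduct_star_self {ψ : ι → ℂ} (hψ : IsUnitVec ψ) : ψ ⬝ᵥ star ψ = 1 := by
  simp only [dotProduct, Pi.star_apply, RCLike.star_def, Complex.mul_conj]
  rw [← Complex.ofReal_sum, hψ, Complex.ofReal_one]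

theorem IsUnitVec.isDensity_outer {ψ : ι → ℂ} (hψ : IsUnitVec ψ) : IsDensity (outer ψ) :=
  ⟨outer_posSemidef ψ, by
    rw [outer_eq_vecMulVec, Matrix.trace_vecMulVec, hψ.dotProduct_star_self]⟩

theorem IsUnitVec.outer_mul_outer {ψ : ι → ℂ} (hψ : IsUnitVec ψ) :
    outer ψ * outer ψ = outer ψ := by
  rw [outer_eq_vecMulVec, Matrix.vecMulVec_mul_vecMulVec, dotProduct_comm,
    hψ.dotProduct_star_self, one_smul]

section

variable [DecidableEq ι] {A : Matrix ι ι ℂ}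

theorem isUnitVec_eigenvectorBasis (hA : A.IsHermitian) (i : ι) :
    IsUnitVec (hA.eigenvectorBasis i).ofLp := by
  have hnorm := EuclideanSpace.norm_sq_eq (hA.eigenvectorBasis i)
  rw [OrthonormalBasis.norm_eq_one, one_pow] at hnorm
  simpa only [IsUnitVec, Complex.normSq_eq_norm_sq] using hnorm.symm

theorem eq_sum_eigenvalues_smul_outer (hA : A.IsHermitian) :
    A = ∑ i, (hA.eigenvalues i : ℂ) • outer (hA.eigenvectorBasis i).ofLp := by
  conv_lhs => rw [hA.spectral_theorem, Unitary.conjStarAlgAut_apply]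
  ext x y
  rw [Matrix.mul_apply, Matrix.sum_apply]
  refine Finset.sum_congr rfl fun i _ => ?_
  rw [Matrix.mul_diagonal, Matrix.star_apply, Matrix.IsHermitian.eigenvectorUnitary_apply,
    Matrix.IsHermitian.eigenvectorUnitary_apply, mul_right_comm, mul_comm]
  rfl

theorem sub_eigenvalue_smul_outer_posSemidef (hA : A.PosSemidef) (i : ι) :
    (A - (hA.isHermitian.eigenvalues i : ℂ) •
      outer (hA.isHermitian.eigenvectorBasis i).ofLp).PosSemidef := by
  conv in A - _ => enter [1]; rw [eq_sum_eigenvalues_smul_outer hA.isHermitian]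
  rw [← Finset.sum_erase_eq_sub (Finset.mem_univ i)]
  exact Matrix.posSemidef_sum _ fun j _ =>
    (outer_posSemidef _).smul (mod_cast hA.eigenvalues_nonneg j)

theorem trace_mul_self_eq_sum_eigenvalues_sq (hA : A.IsHermitian) :
    (A * A).trace = ∑ i, (hA.eigenvalues i : ℂ) ^ 2 := by
  conv in A * A => enter [2]; rw [eq_sum_eigenvalues_smul_outer hA]
  have heigen (i : ι) : A * outer (hA.eigenvectorBasis i).ofLp =
      (hA.eigenvalues i : ℂ) • outer (hA.eigenvectorBasis i).ofLp := by
    rw [outer_eq_vecMulVec, Matrix.mul_vecMulVec, hA.mulVec_eigenvectorBasis]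
    exact Matrix.smul_vecMulVec _ _ _
  simp_rw [Matrix.mul_sum, Matrix.mul_smul, heigen, Matrix.trace_sum, Matrix.trace_smul,
    (isUnitVec_eigenvectorBasis hA _).isDensity_outer.2, smul_eq_mul, mul_one, sq]

end

theorem exists_smul_outer_le_and_trace_sq_le {ρ : Matrix ι ι ℂ} (hρ : IsDensity ρ) :
    ∃ (l : ℝ) (φ : ι → ℂ), 0 ≤ l ∧ IsUnitVec φ ∧ (ρ - (l : ℂ) • outer φ).PosSemidef ∧
      (ρ * ρ).trace.re ≤ l := by
  classical
  have hherm := hρ.1.isHermitian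
  have : Nonempty ι := not_isEmpty_iff.mp fun _ => by simpa [Matrix.trace] using hρ.2
  obtain ⟨i, hi⟩ := Finite.exists_max hherm.eigenvalues
  have hsum : ∑ j, hherm.eigenvalues j = 1 := by
    simpa using congrArg Complex.re (hherm.trace_eq_sum_eigenvalues.symm.trans hρ.2)
  refine ⟨_, _, hρ.1.eigenvalues_nonneg i, isUnitVec_eigenvectorBasis hherm i,
    sub_eigenvalue_smul_outer_posSemidef hρ.1 i, ?_⟩
  calc (ρ * ρ).trace.re = ∑ j, hherm.eigenvalues j * hherm.eigenvalues j := by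
        rw [trace_mul_self_eq_sum_eigenvalues_sq hherm]
        simp [sq]
    _ ≤ ∑ j, hherm.eigenvalues i * hherm.eigenvalues j := by
        gcongr with j
        exacts [hρ.1.eigenvalues_nonneg j, hi j]
    _ = hherm.eigenvalues i := by rw [← Finset.mul_sum, hsum, mul_one]

variable {ρ σ : Matrix ι ι ℂ} {l : ℝ} {N : ℕ} {T : Matrix (Fin N → ι) (Fin N → ι) ℂ}

theorem pow_mul_acc_le_acc (hσ : σ.PosSemidef) (hl : 0 ≤ l)
    (hle : (ρ - (l : ℂ) • σ).PosSemidef) (hT : T.PosSemidef) : l ^ N * acc T σ ≤ acc T ρ := by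
  have hdiff := tpow_sub_tpow_posSemidef (hσ.smul (mod_cast hl : (0 : ℂ) ≤ l)) hle N
  have hnonneg := (Complex.nonneg_iff.mp (trace_mul_nonneg hT hdiff)).1
  rw [tpow_smul, mul_sub, Matrix.trace_sub, Matrix.mul_smul, Matrix.trace_smul, Complex.sub_re,
    smul_eq_mul, ← Complex.ofReal_pow, Complex.re_ofReal_mul] at hnonneg
  exact sub_nonneg.mp hnonneg

variable [DecidableEq ι]

theorem acc_le_pow_mul_acc_add (hρ : IsDensity ρ) (hσ : IsDensity σ) (hl : 0 ≤ l)
    (hle : (ρ - (l : ℂ) • σ).PosSemidef) (hT : IsTester T) :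
    acc T ρ ≤ l ^ N * acc T σ + (1 - l ^ N) := by
  have h := pow_mul_acc_le_acc hσ.1 hl hle hT.2
  rw [acc_sub, acc_sub, acc_one hρ, acc_one hσ] at h
  linarith

-- Passing from `ρ` to `l • σ` and back costs `1 - l ^ N` only once, in the upper bound for `M`.
theorem acc_le_acc_add_of_acc_eq (hρ : IsDensity ρ) (hσ : IsDensity σ) (hl : 0 ≤ l)
    (hle : (ρ - (l : ℂ) • σ).PosSemidef) (hT : T.PosSemidef)
    {M : Matrix (Fin N → ι) (Fin N → ι) ℂ} (hM : IsTester M) (heq : acc M σ = acc T σ) :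
    acc M ρ ≤ acc T ρ + N * (1 - l) := by
  have hupper := acc_le_pow_mul_acc_add hρ hσ hl hle hM
  have hlower := pow_mul_acc_le_acc hσ.1 hl hle hT
  have hbernoulli := one_add_mul_le_pow (show -2 ≤ l - 1 by linarith) N
  rw [add_sub_cancel] at hbernoulli
  rw [heq] at hupper
  linarith

end PureComponent

section ErrorBounds

theorem exp_neg_le_one_sub_add_sq_div_two {t : ℝ} (ht : 0 ≤ t) :
    Real.exp (-t) ≤ 1 - t + t ^ 2 / 2 := by
  have hpos : 0 ≤ 1 - t + t ^ 2 / 2 := by nlinarith [sq_nonneg (t - 1)]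
  rw [Real.exp_neg, inv_le_iff_one_le_mul₀ (Real.exp_pos t)]
  calc 1 ≤ (1 - t + t ^ 2 / 2) * (1 + t + t ^ 2 / 2) := by nlinarith [sq_nonneg (t ^ 2)]
    _ ≤ (1 - t + t ^ 2 / 2) * Real.exp t := by
        gcongr
        exact Real.quadratic_le_exp_of_nonneg ht

theorem two_le_log_one_div_add_ten {s : ℝ} (hs : 0 < s) : 2 ≤ Real.log (1 / s + 10) := by
  have hinv : 0 < 1 / s := by positivity
  rw [Real.le_log_iff_exp_le (by positivity)]
  calc Real.exp 2 = Real.exp 1 ^ 2 := by rw [← Real.exp_nat_mul]; norm_num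
    _ ≤ 3 ^ 2 := by gcongr; exact Real.exp_one_lt_three.le
    _ ≤ 1 / s + 10 := by linarith

theorem exp_neg_log_one_div_add_ten_le {s : ℝ} (hs : 0 < s) :
    Real.exp (-Real.log (1 / s + 10)) ≤ s := by
  rw [Real.exp_neg, Real.exp_log (by positivity)]
  exact inv_le_of_inv_le₀ hs (by rw [one_div]; linarith)

variable {c p δ L : ℝ} {k m N : ℕ}

theorem le_binomialExpectation_thresholdRule (hcp : c ≤ p) (hp0 : 0 ≤ p) (hp1 : p ≤ 1)
    (hk : 0 < k) : c ≤ binomialExpectation p k (thresholdRule (k * (1 - c) + √k)) := by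
  have hk0 : (0 : ℝ) < k := mod_cast hk
  have hcheb := chebyshev_binomialExpectation hp0 hp1 (Real.sqrt_nonneg k) k
  rw [Real.sq_sqrt hk0.le, mul_comm, mul_le_mul_iff_right₀ hk0] at hcheb
  calc c ≤ p := hcp
    _ ≤ binomialExpectation p k (thresholdRule (k * (1 - p) + √k)) := by nlinarith
    _ ≤ binomialExpectation p k (thresholdRule (k * (1 - c) + √k)) :=
        binomialExpectation_mono hp0 hp1 (thresholdRule_mono (by gcongr)) k

theorem sqrt_le_mul_div_four (hδ : 0 ≤ δ) (hk : 16 ≤ k * δ ^ 2) : √k ≤ k * δ / 4 := by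
  rw [Real.sqrt_le_left (by positivity)]
  nlinarith [k.cast_nonneg (α := ℝ)]

theorem add_mul_exp_neg_le_exp (hp1 : p ≤ 1) {θ : ℝ} (hθ : 0 ≤ θ) :
    p + (1 - p) * Real.exp (-θ) ≤ Real.exp (-((1 - p) * (θ - θ ^ 2 / 2))) := by
  have : 0 ≤ 1 - p := by linarith
  calc p + (1 - p) * Real.exp (-θ) ≤ p + (1 - p) * (1 - θ + θ ^ 2 / 2) := by
        gcongr
        exact exp_neg_le_one_sub_add_sq_div_two hθ
    _ = -((1 - p) * (θ - θ ^ 2 / 2)) + 1 := by ring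
    _ ≤ _ := Real.add_one_le_exp _

-- Chernoff's bound at `θ = δ / 4`.
theorem binomialExpectation_thresholdRule_le_exp (hp0 : 0 ≤ p) (hp1 : p ≤ 1) (hδ : 0 ≤ δ)
    (hp : p + δ / 2 ≤ c) (hk : 16 ≤ k * δ ^ 2) :
    binomialExpectation p k (thresholdRule (k * (1 - c) + √k)) ≤
      Real.exp (-(k * δ ^ 2 / 32)) := by
  have hsqrt := sqrt_le_mul_div_four hδ hk
  have : (0 : ℝ) ≤ k := k.cast_nonneg
  have : 0 ≤ 1 - p := by linarith
  have hexponent : δ / 4 * (k * (1 - c) + √k) + k * -((1 - p) * (δ / 4 - (δ / 4) ^ 2 / 2)) ≤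
      -(k * δ ^ 2 / 32) := by
    have hmean : k * (1 - c) + √k - k * (1 - p) ≤ -(k * δ / 4) := by nlinarith
    have hfirst := mul_le_mul_of_nonneg_left hmean (show 0 ≤ δ / 4 by positivity)
    have hsecond : k * (1 - p) * ((δ / 4) ^ 2 / 2) ≤ k * 1 * ((δ / 4) ^ 2 / 2) := by
      gcongr; linarith
    linarith
  calc binomialExpectation p k (thresholdRule (k * (1 - c) + √k))
      ≤ Real.exp (δ / 4 * (k * (1 - c) + √k)) * (p + (1 - p) * Real.exp (-(δ / 4))) ^ k :=
        chernoff_binomialExpectation hp0 hp1 (by positivity) k _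
    _ ≤ Real.exp (δ / 4 * (k * (1 - c) + √k)) *
          Real.exp (-((1 - p) * (δ / 4 - (δ / 4) ^ 2 / 2))) ^ k := by
        gcongr
        exact add_mul_exp_neg_le_exp hp1 (by positivity)
    _ = Real.exp (δ / 4 * (k * (1 - c) + √k) + k * -((1 - p) * (δ / 4 - (δ / 4) ^ 2 / 2))) := by
        rw [← Real.exp_nat_mul, ← Real.exp_add]
    _ ≤ Real.exp (-(k * δ ^ 2 / 32)) := Real.exp_le_exp.mpr hexponent

theorem one_add_div_two_pow_le_exp {x ε : ℝ} (hx0 : 0 ≤ x) (hx : x ≤ 1 - ε) (m : ℕ) :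
    ((1 + x) / 2) ^ m ≤ Real.exp (-(m * ε / 2)) := by
  calc ((1 + x) / 2) ^ m ≤ Real.exp (-(ε / 2)) ^ m := by
        gcongr
        linarith [Real.add_one_le_exp (-(ε / 2))]
    _ = Real.exp (-(m * ε / 2)) := by rw [← Real.exp_nat_mul]; ring_nf

theorem two_mul_ceil_add_mul_ceil_le (hL : 2 ≤ L) (hδ0 : 0 < δ) (hδ1 : δ ≤ 1) (hN : 1 ≤ N) :
    2 * ⌈4 * N * L / δ⌉₊ + N * ⌈32 * L / δ ^ 2⌉₊ ≤ ⌈42 * L * δ⁻¹ ^ 2⌉₊ * N := by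
  have hNR : (1 : ℝ) ≤ N := mod_cast hN
  have hu : 1 ≤ δ⁻¹ := (one_le_inv₀ hδ0).mpr hδ1
  have hswap := Nat.ceil_lt_add_one (show 0 ≤ 4 * N * L / δ by positivity)
  have hthreshold := Nat.ceil_lt_add_one (show 0 ≤ 32 * L / δ ^ 2 by positivity)
  have hu_sq : δ⁻¹ ≤ δ⁻¹ ^ 2 := le_self_pow₀ hu two_ne_zero
  have hLu : 2 ≤ L * δ⁻¹ ^ 2 := hL.trans (le_mul_of_one_le_right (by linarith) (one_le_pow₀ hu))
  have hreal : 2 * (⌈4 * N * L / δ⌉₊ : ℝ) + N * ⌈32 * L / δ ^ 2⌉₊ ≤ ⌈42 * L * δ⁻¹ ^ 2⌉₊ * N :=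
    calc 2 * (⌈4 * N * L / δ⌉₊ : ℝ) + N * ⌈32 * L / δ ^ 2⌉₊
        ≤ 2 * (4 * N * L / δ + 1) + N * (32 * L / δ ^ 2 + 1) := by gcongr
      _ = 8 * N * L * δ⁻¹ + 2 + N * (32 * L * δ⁻¹ ^ 2 + 1) := by
          rw [div_eq_mul_inv, div_eq_mul_inv, inv_pow]; ring
      _ ≤ 8 * N * L * δ⁻¹ ^ 2 + 2 * N + N * (32 * L * δ⁻¹ ^ 2 + 1) := by gcongr; linarith
      _ = (40 * (L * δ⁻¹ ^ 2) + 3) * N := by ring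
      _ ≤ 42 * L * δ⁻¹ ^ 2 * N := by gcongr; linarith
      _ ≤ ⌈42 * L * δ⁻¹ ^ 2⌉₊ * N := by gcongr; exact Nat.le_ceil _
  exact_mod_cast hreal

end ErrorBounds

section Composite

variable {d : ℕ}

theorem exists_isOneWayLOCC_acc_eq_pow_mul_binomialExpectation {N : ℕ}
    {M : Matrix (Fin N → Fin d) (Fin N → Fin d) ℂ} (hM : IsTester M) (m k : ℕ) (τ : ℝ) :
    ∃ T : Matrix (Fin (2 * m + N * k) → Fin d × Fin d) (Fin (2 * m + N * k) → Fin d × Fin d) ℂ,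
      IsTester T ∧ IsOneWayLOCC T ∧ ∀ ρ, IsDensity ρ → acc T ρ =
        ((1 + (ρ * ρ).trace.re) / 2) ^ m *
          binomialExpectation (acc (localA M) ρ) k (thresholdRule τ) := by
  obtain ⟨S, hS, hSlocc, hSacc⟩ :=
    exists_isOneWayLOCC_acc_eq_pow (isTester_swapTest (Fin d × Fin d)) isOneWayLOCC_swapTest m
  obtain ⟨Q, hQ, hQacc⟩ := exists_isTester_acc_eq_binomialExpectation hM k
    (thresholdRule_nonneg τ) (thresholdRule_le_one τ)
  refine ⟨tensor S (localA Q), hS.tensor hQ.localA, hSlocc.tensor (isOneWayLOCC_localA hQ),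
    fun ρ hρ => ?_⟩
  rw [acc_tensor hS.1 hQ.localA.1 hρ.1, hSacc ρ hρ, acc_swapTest hρ, acc_localA, acc_localA,
    hQacc _ (isDensity_ptraceB hρ)]

variable {ι : Type*} [Fintype ι] [DecidableEq ι] {N k m : ℕ} {c δ L : ℝ}
  {T M : Matrix (Fin N → ι) (Fin N → ι) ℂ} {ρ : Matrix ι ι ℂ}

theorem IsUnitVec.le_pow_mul_binomialExpectation {ψ : ι → ℂ} (hψ : IsUnitVec ψ) (hM : IsTester M)
    (hc : c ≤ acc M (outer ψ)) (m : ℕ) (hk : 0 < k) :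
    c ≤ ((1 + (outer ψ * outer ψ).trace.re) / 2) ^ m *
      binomialExpectation (acc M (outer ψ)) k (thresholdRule (k * (1 - c) + √k)) := by
  have hdens := hψ.isDensity_outer
  rw [hψ.outer_mul_outer, hdens.2, Complex.one_re, add_self_div_two, one_pow, one_mul]
  exact le_binomialExpectation_thresholdRule hc (acc_nonneg hM.1 hdens.1) (acc_le_one hM hdens) hk

theorem trace_sq_le_or_acc_le_acc_add (hT : T.PosSemidef) (hM : IsTester M)
    (heq : ∀ ψ, acc M (outer ψ) = acc T (outer ψ)) (hρ : IsDensity ρ) (hN : 1 ≤ N) (δ : ℝ) :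
    (ρ * ρ).trace.re ≤ 1 - δ / (2 * N) ∨ acc M ρ ≤ acc T ρ + δ / 2 := by
  have : (0 : ℝ) < N := mod_cast hN
  obtain ⟨l, φ, hl, hφ, hle, hpurity⟩ := exists_smul_outer_le_and_trace_sq_le hρ
  refine (le_or_gt l (1 - δ / (2 * N))).imp hpurity.trans fun hl_large => ?_
  calc acc M ρ ≤ acc T ρ + N * (1 - l) :=
        acc_le_acc_add_of_acc_eq hρ hφ.isDensity_outer hl hle hT hM (heq φ)
    _ ≤ acc T ρ + N * (δ / (2 * N)) := by gcongr; linarith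
    _ = acc T ρ + δ / 2 := by field_simp

theorem pow_mul_binomialExpectation_le_exp (hT : T.PosSemidef) (hM : IsTester M)
    (heq : ∀ ψ, acc M (outer ψ) = acc T (outer ψ)) (hρ : IsDensity ρ) (hN : 1 ≤ N) (hδ : 0 < δ)
    (hTρ : acc T ρ + δ ≤ c) (hL : 2 ≤ L) (hm : 4 * N * L / δ ≤ m) (hk : 32 * L / δ ^ 2 ≤ k) :
    ((1 + (ρ * ρ).trace.re) / 2) ^ m *
      binomialExpectation (acc M ρ) k (thresholdRule (k * (1 - c) + √k)) ≤ Real.exp (-L) := by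
  have hNR : (0 : ℝ) < N := mod_cast hN
  have hpurity0 : 0 ≤ (ρ * ρ).trace.re := (Complex.nonneg_iff.mp (trace_mul_nonneg hρ.1 hρ.1)).1
  have hswap1 : (1 + (ρ * ρ).trace.re) / 2 ≤ 1 :=
    (acc_swapTest hρ).symm.trans_le (acc_le_one (isTester_swapTest ι) hρ)
  have hacc0 := acc_nonneg hM.1 hρ.1
  have hacc1 := acc_le_one hM hρ
  obtain ⟨hbinom0, hbinom1⟩ := binomialExpectation_mem_Icc hacc0 hacc1
    (thresholdRule_nonneg (k * (1 - c) + √k)) (thresholdRule_le_one _) k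
  rcases trace_sq_le_or_acc_le_acc_add hT hM heq hρ hN δ with hpurity | hclose
  · have hLm : L ≤ m * (δ / (2 * N)) / 2 := by
      rw [div_le_iff₀ hδ] at hm
      rw [← mul_div_assoc, div_div, le_div_iff₀ (by positivity)]
      linarith
    calc _ ≤ ((1 + (ρ * ρ).trace.re) / 2) ^ m :=
          mul_le_of_le_one_right (by positivity) hbinom1
      _ ≤ Real.exp (-(m * (δ / (2 * N)) / 2)) := one_add_div_two_pow_le_exp hpurity0 hpurity m
      _ ≤ Real.exp (-L) := by gcongr
  · have hLk : 32 * L ≤ k * δ ^ 2 := (div_le_iff₀ (by positivity)).mp hk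
    calc _ ≤ binomialExpectation (acc M ρ) k (thresholdRule (k * (1 - c) + √k)) :=
          mul_le_of_le_one_left hbinom0 (pow_le_one₀ (by positivity) hswap1)
      _ ≤ Real.exp (-(k * δ ^ 2 / 32)) :=
          binomialExpectation_thresholdRule_le_exp hacc0 hacc1 hδ.le (by linarith) (by linarith)
      _ ≤ Real.exp (-L) := by gcongr; linarith

end Composite

theorem stmt_1_general {d : ℕ} {Pyes Pno : Set (Matrix (Fin d × Fin d) (Fin d × Fin d) ℂ)}
    (hinvyes : IsBobInvariant Pyes) (hinvno : IsBobInvariant Pno)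
    (hpure : ∀ ρ ∈ Pyes, ∃ ψ : Fin d × Fin d → ℂ, IsUnitVec ψ ∧ ρ = outer ψ)
    (hdens : ∀ ρ ∈ Pno, IsDensity ρ) {c s : ℝ} (hs0 : 0 < s) (hsc : s < c) (hc1 : c ≤ 1)
    {N : ℕ} (hN : 1 ≤ N)
    (hexists : ∃ T : Matrix (Fin N → Fin d × Fin d) (Fin N → Fin d × Fin d) ℂ,
      IsTesterFor Pyes Pno c s T) :
    ∃ N' ≤ ⌈42 * Real.log (1 / s + 10) * (c - s)⁻¹ ^ 2⌉₊ * N,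
      ∃ T' : Matrix (Fin N' → Fin d × Fin d) (Fin N' → Fin d × Fin d) ℂ,
        IsOneWayLOCC T' ∧ IsTesterFor Pyes Pno c s T' := by
  have hδ : 0 < c - s := sub_pos.mpr hsc
  have hL := two_le_log_one_div_add_ten hs0
  set L := Real.log (1 / s + 10)
  obtain ⟨T, ⟨hT, hTyes, hTno⟩, hcomm⟩ :=
    exists_isTesterFor_forall_commute_bipartite_one hinvyes hinvno hexists
  obtain ⟨M, hM, heq⟩ := exists_isTester_acc_bipartite_one_outer_eq hT hcomm
  rw [← localA_eq_bipartite] at heq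
  let m := ⌈4 * N * L / (c - s)⌉₊
  let k := ⌈32 * L / (c - s) ^ 2⌉₊
  obtain ⟨T', hT', hlocc, hacc⟩ := exists_isOneWayLOCC_acc_eq_pow_mul_binomialExpectation hM m k
    (k * (1 - c) + √k)
  refine ⟨_, two_mul_ceil_add_mul_ceil_le hL hδ (by linarith) hN, T', hlocc, hT',
    fun ρ hρ => ?_, fun ρ hρ => ?_⟩
  · obtain ⟨ψ, hψ, rfl⟩ := hpure ρ hρ
    rw [hacc _ hψ.isDensity_outer]
    exact hψ.le_pow_mul_binomialExpectation hM.localA ((hTyes _ hρ).trans_eq (heq ψ).symm) m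
      (Nat.ceil_pos.mpr (by positivity))
  · rw [hacc ρ (hdens ρ hρ)]
    exact (pow_mul_binomialExpectation_le_exp hT.1 hM.localA heq (hdens ρ hρ) hN hδ
      (by linarith [hTno ρ hρ]) hL (Nat.le_ceil _) (Nat.le_ceil _)).trans
      (exp_neg_log_one_div_add_ten_le hs0)

/-- Theorem `thm:ext`: for properties of bipartite mixed states that are
unitarily invariant on `H_B` and whose yes-instances are pure, one-way LOCC testers achieve
the optimal sample complexity up to an explicit constant overhead. -/
theorem stmt_1 (d : ℕ) (hd : 1 ≤ d)
    (Pyes Pno : Set (Matrix (Fin d × Fin d) (Fin d × Fin d) ℂ))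
    (hdens : ∀ ρ ∈ Pyes ∪ Pno, IsDensity ρ)
    (hdisj : Disjoint Pyes Pno)
    (hinvyes : ∀ U ∈ Matrix.unitaryGroup (Fin d) ℂ, ∀ ρ ∈ Pyes,
      ((1 : Matrix (Fin d) (Fin d) ℂ) ⊗ₖ U) * ρ * ((1 : Matrix (Fin d) (Fin d) ℂ) ⊗ₖ U)ᴴ ∈ Pyes)
    (hinvno : ∀ U ∈ Matrix.unitaryGroup (Fin d) ℂ, ∀ ρ ∈ Pno,
      ((1 : Matrix (Fin d) (Fin d) ℂ) ⊗ₖ U) * ρ * ((1 : Matrix (Fin d) (Fin d) ℂ) ⊗ₖ U)ᴴ ∈ Pno)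
    (hpure : ∀ ρ ∈ Pyes, ∃ ψ : Fin d × Fin d → ℂ, IsUnitVec ψ ∧ ρ = outer ψ)
    (c s : ℝ) (hs0 : 0 < s) (hsc : s < c) (hc1 : c ≤ 1)
    (N : ℕ) (hN : 1 ≤ N)
    (hexists : ∃ T : Matrix (Fin N → Fin d × Fin d) (Fin N → Fin d × Fin d) ℂ,
      IsTester T ∧ (∀ ρ ∈ Pyes, c ≤ acc T ρ) ∧ (∀ ρ ∈ Pno, acc T ρ ≤ s)) :
    ∃ N' : ℕ,
      N' ≤ ⌈100 * Real.log (1 / s + 10) * ((c - s)⁻¹) ^ 3⌉₊ * max N ⌈2 * (c - s)⁻¹⌉₊ ∧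
      ∃ T' : Matrix (Fin N' → Fin d × Fin d) (Fin N' → Fin d × Fin d) ℂ,
        IsTester T' ∧ IsOneWayLOCC T' ∧
        (∀ ρ ∈ Pyes, c ≤ acc T' ρ) ∧ (∀ ρ ∈ Pno, acc T' ρ ≤ s) := by
  have hδ : 0 < c - s := sub_pos.mpr hsc
  have hL := two_le_log_one_div_add_ten hs0
  have hδ_inv : 1 ≤ (c - s)⁻¹ := (one_le_inv₀ hδ).mpr (by linarith)
  obtain ⟨N', hN', T', hlocc, hT', hyes, hno⟩ := stmt_1_general hinvyes hinvno hpure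
    (fun ρ hρ => hdens ρ (Or.inr hρ)) hs0 hsc hc1 hN hexists
  refine ⟨N', hN'.trans ?_, T', hT', hlocc, hyes, hno⟩
  gcongr
  exacts [by norm_num, by norm_num, le_max_left N _]

end PaperStmt
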